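/- Let q = 1, n = 1, k ≥ 0, and r ≥ 6. Then for every x ∈ B_{r−3} \ B_3, | E_{ρ∼IUD} E[ wt_{ζ_{τ_{k,r}(ρ)}}(x) ] | ≤ (1 − 1/(58·2^{58})) · f(x), where the inner expectation is over the frozen single-walker H–V walk with initial label configuration ρ and the outer expectation is over ρ sampled from the IUD measure. -/

import Mathlib

/-!
Off the origin the potential kernel is harmonic, so `f_V = -f_H` there (`fV_eq_neg`) and the final
weight of `x` is `f_H(x)` or `-f_H(x)` according to its final label. Its expectation is therefore
`f_H(x) (2 p - 1)`, where `p` is the averaged probability that the final label is `H`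
(`integral_wt`), and the claim is that `p` is bounded away from `0` and `1`.

For `q = 1` the walk is driven by fair coin flips: the label dictates the axis and a coin dictates
the sign of each step. A realisation up to the stopping time is thus a finite coin word of
probability `2 ^ (-length)`. That these words have total probability one follows from the
martingale `|Y_t|² - t` (`one_le_mass_stops`).

Suppose first that a word leads the walk through the `3 × 3` block around `x`. This block contains
neither the origin nor boundary points, so the walk leaves it for a last time, from a ring site of
the block. Just before this last exit a loop is inserted, which stays inside the block, returns to
the exit site with the same label there and flips the label of `x` (`exists_insertion`). What
follows is unaffected, since it uses no other label in the block, so the final label of `x` is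
flipped. Such a loop of length at most `14` exists for every labelling of the block, by a finite
search (`exists_loop`). The insertion can be undone by reading off the last exit again, so it costs
at most a factor `∑ n < 15, 2 ^ n < 2 ^ 15` (`visited_le`).

If the walk never meets the block, flipping the initial label of `x` changes its final label and
nothing else (`unvisited_flip`), and this preserves the law of independent uniform labels
(`map_flipAt`). Altogether the averaged probability of either final label is at most `2 ^ 15 + 1`
times that of the other (`lintegral_mass_le`), so `|2 p - 1| ≤ 1 - 2 / (2 ^ 15 + 2)`, which is
better than the constant required.
-/

open MeasureTheory Filter
open scoped ENNReal

namespace HV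

abbrev Z2 := ℤ × ℤ

/-- A label configuration: `true` stands for label `H`, `false` for label `V`. -/
abbrev Config := Z2 → Bool

/-- The state of the walk: positions of the `n` walkers and the label configuration. -/
abbrev State (n : ℕ) := (Fin n → Z2) × Config

/-- A trajectory: the sequence of positions of the active walker after each step. -/
abbrev Path := ℕ → Z2

/-- The walker that is active at the `(t+1)`-st step of the cyclic turn order. -/
def active (n : ℕ) (hn : 0 < n) (t : ℕ) : Fin n := ⟨t % n, Nat.mod_lt t hn⟩

/-- Update the state when walker `i` moves to `y`: the label of the vertex the walker
leaves becomes `H` (`true`) if the move was horizontal, `V` (`false`) if vertical. -/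
def apply' (n : ℕ) (s : State n) (i : Fin n) (y : Z2) : State n :=
  (Function.update s.1 i y,
    Function.update s.2 (s.1 i) (if y.2 = (s.1 i).2 then true else false))

/-- The one-step transition probability of the `H`–`V` walk with parameter `q`:
probability that, from state `s`, the active walker `i` moves to `y`.  The label of the
current location is first resampled (flipped with probability `q`), and then the walker
takes a uniform horizontal step if the new label is `H`, a uniform vertical step if the
new label is `V`. -/
noncomputable def weight (q : ℝ) (n : ℕ) (s : State n) (i : Fin n) (y : Z2) : ℝ≥0∞ :=
  if y = s.1 i + (1, 0) ∨ y = s.1 i - (1, 0) then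
    ENNReal.ofReal ((if s.2 (s.1 i) then 1 - q else q) / 2)
  else if y = s.1 i + (0, 1) ∨ y = s.1 i - (0, 1) then
    ENNReal.ofReal ((if s.2 (s.1 i) then q else 1 - q) / 2)
  else 0

/-- The deterministic reconstruction of the state of the `n`-walker `H`–`V` walk
(with all walkers starting at the origin and initial labels `ρ`) from a trajectory. -/
def seq (n : ℕ) (hn : 0 < n) (ρ : Config) (y : Path) : ℕ → State n
  | 0 => (fun _ => (0, 0), ρ)
  | t + 1 => apply' n (seq n hn ρ y t) (active n hn t) (y t)

/-- `μ` is the law of the `n`-walker `H`–`V` walk with parameter `q` and initial labels `ρ`: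
the finite-dimensional distributions are products of one-step transition probabilities. -/
def IsLaw (q : ℝ) (n : ℕ) (hn : 0 < n) (ρ : Config) (μ : Measure Path) : Prop :=
  ∀ (t : ℕ) (c : Path),
    μ {y : Path | ∀ s < t, y s = c s} =
      ∏ s ∈ Finset.range t, weight q n (seq n hn ρ c s) (active n hn s) (c s)

/-- A trajectory is recurrent if every vertex is visited infinitely many times. -/
def Recurrent (n : ℕ) (hn : 0 < n) (ρ : Config) (y : Path) : Prop :=
  ∀ v : Z2, {t : ℕ | ∃ i, (seq n hn ρ y t).1 i = v}.Infinite

end HV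

namespace HV

/-- The Euclidean norm of a lattice point. -/
noncomputable def norm2 (x : Z2) : ℝ := Real.sqrt ((x.1 : ℝ) ^ 2 + (x.2 : ℝ) ^ 2)

/-- The open Euclidean ball `B_r` of radius `r` around the origin in `ℤ²`. -/
def ball (r : ℝ) : Set Z2 := {x | norm2 x < r}

/-- `x` and `y` are nearest neighbors in `ℤ²`. -/
def adj (x y : Z2) : Prop := |x.1 - y.1| + |x.2 - y.2| = 1

/-- The outer boundary `∂B_r` of the ball `B_r`. -/
def bdry (r : ℝ) : Set Z2 := {x | x ∉ ball r ∧ ∃ y, adj x y ∧ y ∈ ball r}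

open Classical in
/-- Update of the state of the frozen walk: a walker located on `∂B_r` is frozen and
skips its turn. -/
noncomputable def fapply (n : ℕ) (r : ℝ) (s : State n) (i : Fin n) (y : Z2) : State n :=
  if s.1 i ∈ bdry r then s else apply' n s i y

open Classical in
/-- The one-step transition probability of the frozen `H`–`V` walk: a walker located on
`∂B_r` stays put with probability one. -/
noncomputable def fweight (q : ℝ) (n : ℕ) (r : ℝ) (s : State n) (i : Fin n) (y : Z2) :
    ℝ≥0∞ :=
  if s.1 i ∈ bdry r then (if y = s.1 i then 1 else 0) else weight q n s i y

/-- The deterministic reconstruction of the state of the frozen `n`-walker `H`–`V` walk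
in `B_r` (with all walkers starting at the origin and initial labels `ρ`) from a
trajectory. -/
noncomputable def fseq (n : ℕ) (hn : 0 < n) (r : ℝ) (ρ : Config) (y : Path) :
    ℕ → State n
  | 0 => (fun _ => (0, 0), ρ)
  | t + 1 => fapply n r (fseq n hn r ρ y t) (active n hn t) (y t)

/-- `μ` is the law of the frozen `n`-walker `H`–`V` walk in `B_r` with parameter `q` and
initial labels `ρ`. -/
def IsFrozenLaw (q : ℝ) (n : ℕ) (hn : 0 < n) (r : ℝ) (ρ : Config) (μ : Measure Path) :
    Prop :=
  ∀ (t : ℕ) (c : Path),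
    μ {y : Path | ∀ s < t, y s = c s} =
      ∏ s ∈ Finset.range t, fweight q n r (fseq n hn r ρ c s) (active n hn s) (c s)

open Classical in
/-- `R_{t,r}`: the number of returns to the origin up to time `t` of a walk with state
sequence `S`. -/
noncomputable def returns (n : ℕ) (S : ℕ → State n) (t : ℕ) : ℕ :=
  ((Finset.Icc 1 t).filter fun s =>
    ∃ i, (S (s - 1)).1 i ≠ (0, 0) ∧ (S s).1 i = (0, 0)).card

open Classical in
/-- `N_t`: the number of departures from the origin up to time `t` of a walk with state
sequence `S`. -/
noncomputable def departures (n : ℕ) (S : ℕ → State n) (t : ℕ) : ℕ :=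
  ((Finset.Icc 1 t).filter fun s =>
    ∃ i, (S (s - 1)).1 i = (0, 0) ∧ (S s).1 i ≠ (0, 0)).card

/-- The return probability `p_{k,r}(ρ) = lim_{t→∞} P[R_{t,r} ≥ k]` of the frozen walk
with law `μr`. -/
noncomputable def returnProb (n : ℕ) (hn : 0 < n) (r : ℝ) (ρ : Config)
    (μr : Measure Path) (k : ℕ) : ℝ :=
  limUnder atTop fun t =>
    (μr {y : Path | k ≤ returns n (fun u => fseq n hn r ρ y u) t}).toReal

open Classical in
/-- The stopping time `τ_{k,r}(ρ)`: the first time at which the frozen walk has either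
returned to the origin `k` times or all walkers are frozen at `∂B_r`. -/
noncomputable def tau (n : ℕ) (hn : 0 < n) (r : ℝ) (ρ : Config) (k : ℕ) (y : Path) :
    ℕ :=
  sInf {t : ℕ | returns n (fun u => fseq n hn r ρ y u) t = k ∨
    ∀ i, (fseq n hn r ρ y t).1 i ∈ bdry r}

end HV

namespace HV

/-- `srw i x`: the probability that the simple random walk on `ℤ²` started at the
origin is at `x` after `i` steps. -/
noncomputable def srw : ℕ → Z2 → ℝ
  | 0, x => if x = (0, 0) then 1 else 0
  | i + 1, x =>
    (srw i (x + (1, 0)) + srw i (x - (1, 0)) + srw i (x + (0, 1)) + srw i (x - (0, 1))) / 4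

/-- The potential kernel `a` of the simple random walk on `ℤ²`:
`a(x) = lim_{m→∞} Σ_{i<m} (p_i(0,0) − p_i(x))`. -/
noncomputable def potKer (x : Z2) : ℝ :=
  limUnder atTop fun m : ℕ => ∑ i ∈ Finset.range m, (srw i (0, 0) - srw i x)

/-- `f_H(x) = (a(x+(0,1)) + a(x−(0,1)) − 2a(x))/4`. -/
noncomputable def fH (x : Z2) : ℝ :=
  (potKer (x + (0, 1)) + potKer (x - (0, 1)) - 2 * potKer x) / 4

/-- `f_V(x) = (a(x+(1,0)) + a(x−(1,0)) − 2a(x))/4`. -/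
noncomputable def fV (x : Z2) : ℝ :=
  (potKer (x + (1, 0)) + potKer (x - (1, 0)) - 2 * potKer x) / 4

/-- The weight `wt_ζ(x)` of the vertex `x` under the label configuration `ζ`. -/
noncomputable def wt (ζ : Config) (x : Z2) : ℝ := if ζ x then fH x else fV x

/-- `f(x) = max(|f_H(x)|, |f_V(x)|)`. -/
noncomputable def fMax (x : Z2) : ℝ := max |fH x| |fV x|

/-- The argument of a nonzero lattice point: the unique `θ ∈ (−π, π]` with
`x/|x| = (cos θ, sin θ)`. -/
noncomputable def argZ (x : Z2) : ℝ := Complex.arg ((x.1 : ℂ) + (x.2 : ℂ) * Complex.I)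

open Classical in
/-- The set of lattice points in the open Euclidean ball of radius `R`, as a finite
set. -/
noncomputable def ballFinset (R : ℝ) : Finset Z2 :=
  (Finset.Icc (-⌈R⌉, -⌈R⌉) (⌈R⌉, ⌈R⌉)).filter fun x => norm2 x < R

end HV

namespace HV

/-- `ν` is the IUD measure on label configurations: the labels at distinct vertices are
independent and uniform on `{H, V}`, i.e. every finite cylinder event has probability
`(1/2)^(number of constrained vertices)`. -/
def IsIUD (ν : Measure Config) : Prop :=
  ∀ (F : Finset Z2) (g : Z2 → Bool),
    ν {ρ : Config | ∀ x ∈ F, ρ x = g x} = (2 : ℝ≥0∞)⁻¹ ^ F.card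

end HV

/-! ### Harmonicity of the potential kernel away from the origin -/

namespace HV

/-- The law of the simple random walk on `ℤ`; in the diagonal coordinates `x₁ + x₂`, `x₁ - x₂`
the walk on `ℤ²` is a product of two such walks. -/
noncomputable def srw1 : ℕ → ℤ → ℝ
  | 0, u => if u = 0 then 1 else 0
  | n + 1, u => (srw1 n (u + 1) + srw1 n (u - 1)) / 2

lemma srw1_nonneg (n : ℕ) : ∀ u, 0 ≤ srw1 n u := by
  induction n with
  | zero => intro u; simp only [srw1]; split_ifs <;> norm_num
  | succ n ih => intro u; simp only [srw1]; have := ih (u + 1); have := ih (u - 1); linarith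

lemma srw1_neg (n : ℕ) : ∀ u, srw1 n (-u) = srw1 n u := by
  induction n with
  | zero => intro u; simp [srw1]
  | succ n ih =>
    intro u
    simp only [srw1]
    have h1 := ih (u + 1)
    have h2 := ih (u - 1)
    rw [show -(u + 1) = -u - 1 by ring] at h1
    rw [show -(u - 1) = -u + 1 by ring] at h2
    rw [h1, h2]; ring

lemma srw1_parity (n : ℕ) : ∀ u : ℤ, (n + u) % 2 = 1 → srw1 n u = 0 := by
  induction n with
  | zero => intro u hu; simp only [srw1]; rw [if_neg]; rintro rfl; simp at hu
  | succ n ih =>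
    intro u hu
    simp only [srw1]
    push_cast at hu
    rw [ih (u + 1) (by omega), ih (u - 1) (by omega)]; simp

/-- The law is unimodal along each parity class. -/
lemma srw1_step (n : ℕ) : ∀ u : ℤ, -1 ≤ u → srw1 n (u + 2) ≤ srw1 n u := by
  induction n with
  | zero =>
    intro u hu
    simp only [srw1]
    rw [if_neg (by omega)]
    split_ifs <;> norm_num
  | succ n ih =>
    intro u hu
    simp only [srw1]
    rcases eq_or_lt_of_le hu with h | h
    · subst h
      have := srw1_neg n 2
      norm_num at this ⊢
      rw [this]
      linarith
    · have h1 := ih (u - 1) (by omega)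
      have h2 := ih (u + 1) (by omega)
      rw [show u - 1 + 2 = u + 1 by ring] at h1
      rw [show u + 1 + 2 = u + 2 + 1 by ring] at h2
      rw [show u + 2 - 1 = u + 1 by ring]
      linarith

lemma srw1_le_zero (m : ℕ) (u : ℤ) : srw1 (2 * m) u ≤ srw1 (2 * m) 0 := by
  have key : ∀ j : ℕ, srw1 (2 * m) (2 * j : ℤ) ≤ srw1 (2 * m) 0 := by
    intro j
    induction j with
    | zero => simp
    | succ j ih =>
      have := srw1_step (2 * m) (2 * j) (by omega)
      push_cast
      rw [show (2 * ((j : ℤ) + 1)) = 2 * j + 2 by ring]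
      exact this.trans ih
  rcases Int.emod_two_eq_zero_or_one u with h | h
  · obtain ⟨j, hj⟩ : ∃ j : ℕ, u = 2 * j ∨ u = -(2 * j) := ⟨u.natAbs / 2, by omega⟩
    rcases hj with rfl | rfl
    · exact key j
    · rw [srw1_neg]; exact key j
  · rw [srw1_parity _ u (by push_cast; omega)]
    exact srw1_nonneg _ _

lemma srw_eq_mul (n : ℕ) : ∀ x : Z2, srw n x = srw1 n (x.1 + x.2) * srw1 n (x.1 - x.2) := by
  induction n with
  | zero =>
    rintro ⟨a, b⟩
    simp only [srw, srw1, Prod.mk.injEq]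
    by_cases h : a = 0 ∧ b = 0
    · obtain ⟨rfl, rfl⟩ := h; simp
    · rw [if_neg h]
      by_cases h1 : a + b = 0
      · rw [if_neg (show ¬ a - b = 0 by omega)]; simp
      · rw [if_neg h1]; simp
  | succ n ih =>
    rintro ⟨a, b⟩
    simp only [srw, srw1, ih, Prod.mk_add_mk, Prod.mk_sub_mk]
    rw [show a + 1 + (b + 0) = a + b + 1 by ring, show a + 1 - (b + 0) = a - b + 1 by ring,
      show a - 1 + (b - 0) = a + b - 1 by ring, show a - 1 - (b - 0) = a - b - 1 by ring,
      show a + 0 + (b + 1) = a + b + 1 by ring, show a + 0 - (b + 1) = a - b - 1 by ring,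
      show a - 0 + (b - 1) = a + b - 1 by ring, show a - 0 - (b - 1) = a - b + 1 by ring]
    ring

lemma srw_nonneg (n : ℕ) (x : Z2) : 0 ≤ srw n x := by
  rw [srw_eq_mul]; exact mul_nonneg (srw1_nonneg _ _) (srw1_nonneg _ _)

lemma srw_parity (n : ℕ) (x : Z2) (h : (n + (x.1 + x.2)) % 2 = 1) : srw n x = 0 := by
  rw [srw_eq_mul, srw1_parity _ _ h, zero_mul]

lemma srw_even_le (m : ℕ) (x : Z2) : srw (2 * m) x ≤ srw (2 * m) (0, 0) := by
  rw [srw_eq_mul, srw_eq_mul]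
  simp only [add_zero, sub_zero]
  exact mul_le_mul (srw1_le_zero _ _) (srw1_le_zero _ _) (srw1_nonneg _ _) (srw1_nonneg _ _)

lemma srw_odd_le (m : ℕ) (x : Z2) : srw (2 * m + 1) x ≤ srw (2 * m) (0, 0) := by
  simp only [srw]
  have := srw_even_le m (x + (1, 0))
  have := srw_even_le m (x - (1, 0))
  have := srw_even_le m (x + (0, 1))
  have := srw_even_le m (x - (0, 1))
  linarith

lemma srw_sum_le (n : ℕ) : ∀ F : Finset Z2, ∑ x ∈ F, srw n x ≤ 1 := by
  induction n with
  | zero =>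
    intro F
    simp only [srw]
    rw [Finset.sum_ite_eq']
    split_ifs <;> norm_num
  | succ n ih =>
    intro F
    have h : ∀ e : Z2, ∑ x ∈ F, srw n (x + e) ≤ 1 := by
      intro e
      have := ih (F.map (addRightEmbedding e))
      rwa [Finset.sum_map] at this
    simp only [srw]
    rw [← Finset.sum_div, Finset.sum_add_distrib, Finset.sum_add_distrib, Finset.sum_add_distrib]
    have h1 := h (1, 0)
    have h2 := h (-(1, 0))
    have h3 := h (0, 1)
    have h4 := h (-(0, 1))
    simp only [← sub_eq_add_neg] at h2 h4
    linarith

/-- The partial sums `∑_{i<m} (p_i(0) - p_i(x))` whose limit is the potential kernel. -/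
noncomputable def potSum (m : ℕ) (x : Z2) : ℝ := ∑ i ∈ Finset.range m, (srw i (0, 0) - srw i x)

lemma potSum_succ (m : ℕ) (x : Z2) :
    potSum (m + 1) x = potSum m x + (srw m (0, 0) - srw m x) := by
  unfold potSum; rw [Finset.sum_range_succ]

/-- The discrete Laplacian of a partial sum telescopes. -/
lemma potSum_laplace (m : ℕ) (x : Z2) :
    potSum m (x + (1, 0)) + potSum m (x - (1, 0)) + potSum m (x + (0, 1)) + potSum m (x - (0, 1))
      = 4 * potSum m x + 4 * srw 0 x - 4 * srw m x := by
  induction m with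
  | zero => simp [potSum]
  | succ m ih =>
    simp only [potSum_succ]
    have : srw (m + 1) x = (srw m (x + (1, 0)) + srw m (x - (1, 0)) + srw m (x + (0, 1))
      + srw m (x - (0, 1))) / 4 := rfl
    rw [this]
    linarith

lemma potSum_even_mono (x : Z2) : Monotone fun m => potSum (2 * m) x := by
  refine monotone_nat_of_le_succ fun m => ?_
  rw [show 2 * (m + 1) = 2 * m + 1 + 1 by ring, potSum_succ, potSum_succ]
  have h0 := srw_nonneg (2 * m + 1) (0, 0)
  rcases Int.emod_two_eq_zero_or_one (x.1 + x.2) with h | h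
  · rw [srw_parity (2 * m + 1) x (by push_cast; omega)]
    have := srw_even_le m x
    linarith
  · rw [srw_parity (2 * m) x (by push_cast; omega)]
    have := srw_odd_le m x
    linarith

lemma potSum_even_nonneg (m : ℕ) (x : Z2) : 0 ≤ potSum (2 * m) x := by
  have := potSum_even_mono x (Nat.zero_le m)
  simpa [potSum] using this

lemma potSum_nbr (m : ℕ) (x : Z2) :
    (potSum (2 * m) (x + (1, 0)) ≤ 4 * potSum (2 * m) x + 4 ∧
      potSum (2 * m) (x - (1, 0)) ≤ 4 * potSum (2 * m) x + 4) ∧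
    (potSum (2 * m) (x + (0, 1)) ≤ 4 * potSum (2 * m) x + 4 ∧
      potSum (2 * m) (x - (0, 1)) ≤ 4 * potSum (2 * m) x + 4) := by
  have h := potSum_laplace (2 * m) x
  have h0 : srw 0 x ≤ 1 := by simp only [srw]; split_ifs <;> norm_num
  have h1 := srw_nonneg (2 * m) x
  have := potSum_even_nonneg m (x + (1, 0))
  have := potSum_even_nonneg m (x - (1, 0))
  have := potSum_even_nonneg m (x + (0, 1))
  have := potSum_even_nonneg m (x - (0, 1))
  refine ⟨⟨?_, ?_⟩, ?_, ?_⟩ <;> linarith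

/-- Boundedness spreads from the origin along nearest-neighbour paths, by `potSum_nbr`. -/
lemma potSum_bdd (x : Z2) : ∃ C, ∀ m, potSum (2 * m) x ≤ C := by
  have h1 : ∀ a : ℤ, ∃ C, ∀ m, potSum (2 * m) (a, 0) ≤ C := by
    intro a
    induction a using Int.induction_on with
    | zero => exact ⟨0, fun m => by simp [potSum]⟩
    | succ i ih =>
      obtain ⟨C, hC⟩ := ih
      refine ⟨4 * C + 4, fun m => ?_⟩
      have := (potSum_nbr m ((i : ℤ), 0)).1.1
      simp only [Prod.mk_add_mk, add_zero] at this
      linarith [hC m]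
    | pred i ih =>
      obtain ⟨C, hC⟩ := ih
      refine ⟨4 * C + 4, fun m => ?_⟩
      have := (potSum_nbr m (-(i : ℤ), 0)).1.2
      simp only [Prod.mk_sub_mk, sub_zero] at this
      linarith [hC m]
  obtain ⟨a, b⟩ := x
  induction b using Int.induction_on with
  | zero => exact h1 a
  | succ i ih =>
    obtain ⟨C, hC⟩ := ih
    refine ⟨4 * C + 4, fun m => ?_⟩
    have := (potSum_nbr m (a, (i : ℤ))).2.1
    simp only [Prod.mk_add_mk, add_zero] at this
    linarith [hC m]
  | pred i ih =>
    obtain ⟨C, hC⟩ := ih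
    refine ⟨4 * C + 4, fun m => ?_⟩
    have := (potSum_nbr m (a, -(i : ℤ))).2.2
    simp only [Prod.mk_sub_mk, sub_zero] at this
    linarith [hC m]

lemma potSum_even_tendsto (x : Z2) : ∃ L, Tendsto (fun m => potSum (2 * m) x) atTop (nhds L) := by
  obtain ⟨C, hC⟩ := potSum_bdd x
  exact ⟨_, tendsto_atTop_ciSup (potSum_even_mono x) ⟨C, by rintro _ ⟨m, rfl⟩; exact hC m⟩⟩

/-- Since the increments of the convergent sums vanish in the limit, `p_{2m}(x)` has the same limit
`c` for all `x` in the even sublattice; total mass at most one forces `c = 0`. -/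
lemma srw_zero_tendsto : Tendsto (fun m => srw (2 * m) (0, 0)) atTop (nhds 0) := by
  have anti : Antitone fun m => srw (2 * m) (0, 0) := by
    refine antitone_nat_of_succ_le fun m => ?_
    rw [show 2 * (m + 1) = (2 * m + 1) + 1 by ring]
    have h := srw_odd_le m
    have h1 := h ((0, 0) + (1, 0))
    have h2 := h ((0, 0) - (1, 0))
    have h3 := h ((0, 0) + (0, 1))
    have h4 := h ((0, 0) - (0, 1))
    change (srw (2 * m + 1) _ + srw (2 * m + 1) _ + srw (2 * m + 1) _ + srw (2 * m + 1) _) / 4 ≤ _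
    linarith
  have hlim := tendsto_atTop_ciInf anti ⟨0, by rintro _ ⟨m, rfl⟩; exact srw_nonneg _ _⟩
  set c := ⨅ m, srw (2 * m) (0, 0)
  have hx : ∀ j : ℕ, Tendsto (fun m => srw (2 * m) (2 * (j : ℤ), 0)) atTop (nhds c) := by
    intro j
    obtain ⟨L, hL⟩ := potSum_even_tendsto (2 * (j : ℤ), 0)
    have hL' := hL.comp (tendsto_add_atTop_nat 1)
    have := hlim.sub (hL'.sub hL)
    simp only [sub_self, sub_zero] at this
    refine this.congr fun m => ?_
    simp only [Function.comp]
    rw [show 2 * (m + 1) = 2 * m + 1 + 1 by ring, potSum_succ, potSum_succ,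
      srw_parity (2 * m + 1) (0, 0) (by push_cast; omega),
      srw_parity (2 * m + 1) (2 * (j : ℤ), 0) (by push_cast; omega)]
    ring
  have hc0 : 0 ≤ c := ge_of_tendsto' hlim fun m => srw_nonneg _ _
  have hN : ∀ N : ℕ, N * c ≤ 1 := by
    intro N
    have h1 : Tendsto (fun m => ∑ j ∈ Finset.range N, srw (2 * m) (2 * (j : ℤ), 0)) atTop
        (nhds (∑ _j ∈ Finset.range N, c)) := tendsto_finsetSum _ fun j _ => hx j
    simp only [Finset.sum_const, Finset.card_range, nsmul_eq_mul] at h1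
    refine le_of_tendsto' h1 fun m => ?_
    have := srw_sum_le (2 * m) ((Finset.range N).map
      ⟨fun j : ℕ => ((2 * (j : ℤ), 0) : Z2), fun a b h => by simpa using h⟩)
    rwa [Finset.sum_map] at this
  have : c = 0 := by
    by_contra hne
    have hpos : 0 < c := lt_of_le_of_ne hc0 (Ne.symm hne)
    obtain ⟨N, hN'⟩ := exists_nat_gt (1 / c)
    rw [div_lt_iff₀ hpos] at hN'
    linarith [hN N]
  rwa [this] at hlim

lemma half_tendsto : Tendsto (fun m : ℕ => m / 2) atTop atTop :=
  Nat.tendsto_div_const_atTop (by norm_num)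

lemma srw_tendsto (x : Z2) : Tendsto (fun m => srw m x) atTop (nhds 0) := by
  refine squeeze_zero (fun m => srw_nonneg m x) (fun m => ?_) (srw_zero_tendsto.comp half_tendsto)
  simp only [Function.comp]
  rcases Nat.even_or_odd' m with ⟨j, rfl | rfl⟩
  · rw [show 2 * j / 2 = j by omega]; exact srw_even_le j x
  · rw [show (2 * j + 1) / 2 = j by omega]; exact srw_odd_le j x

lemma potSum_tendsto (x : Z2) : Tendsto (fun m => potSum m x) atTop (nhds (potKer x)) := by
  suffices h : ∃ L, Tendsto (fun m => potSum m x) atTop (nhds L) from tendsto_nhds_limUnder h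
  obtain ⟨L, hL⟩ := potSum_even_tendsto x
  refine ⟨L, ?_⟩
  have h1 : Tendsto (fun m => potSum m x - potSum (2 * (m / 2)) x) atTop (nhds 0) := by
    refine squeeze_zero' (Eventually.of_forall fun m => ?_) (Eventually.of_forall fun m => ?_)
      (srw_zero_tendsto.comp half_tendsto)
    · rcases Nat.even_or_odd' m with ⟨j, rfl | rfl⟩
      · rw [show 2 * j / 2 = j by omega]; simp
      · rw [show (2 * j + 1) / 2 = j by omega, potSum_succ]
        linarith [srw_even_le j x]
    · simp only [Function.comp]
      rcases Nat.even_or_odd' m with ⟨j, rfl | rfl⟩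
      · rw [show 2 * j / 2 = j by omega]; simpa using srw_nonneg _ _
      · rw [show (2 * j + 1) / 2 = j by omega, potSum_succ]
        linarith [srw_nonneg (2 * j) x]
  have := h1.add (hL.comp half_tendsto)
  simpa [Function.comp_def] using this

/-- `f_H + f_V` is the discrete Laplacian of the potential kernel, which vanishes off the origin. -/
lemma fV_eq_neg (x : Z2) (hx : x ≠ (0, 0)) : fV x = -fH x := by
  have h := fun e => potSum_tendsto e
  have h1 := ((((h (x + (1, 0))).add (h (x - (1, 0)))).add (h (x + (0, 1)))).add
    (h (x - (0, 1)))).sub ((h x).const_mul 4)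
  have h2 : Tendsto (fun m => -4 * srw m x) atTop (nhds 0) := by
    simpa using (srw_tendsto x).const_mul (-4)
  have h3 := tendsto_nhds_unique h1 (h2.congr fun m => by
    rw [potSum_laplace]; simp [srw, hx])
  unfold fV fH
  linarith

end HV

/-! ### The walk driven by fair coin flips -/

namespace HV

/-- The state of the single walker: position, labels, number of returns to the origin so far. -/
abbrev St := Z2 × Config × ℕ

/-- The step in direction `h` (`true` horizontal) with sign given by the coin `b`. -/
def dir (h b : Bool) : Z2 :=
  if h then (if b then (1, 0) else (-1, 0)) else (if b then (0, 1) else (0, -1))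

/-- One step of the `q = 1` walk driven by the coin `b`: the label is flipped, the walker moves
along the new label with the sign `b`, and an arrival at the origin is counted as a return. -/
def stp (b : Bool) (s : St) : St :=
  (s.1 + dir (!s.2.1 s.1) b, Function.update s.2.1 s.1 (!s.2.1 s.1),
    if s.1 + dir (!s.2.1 s.1) b = (0, 0) then s.2.2 + 1 else s.2.2)

/-- The state reached from `s` when the coins are given by the word `w`. -/
def run (s : St) (w : List Bool) : St := w.foldl (fun s b => stp b s) s

@[simp] lemma run_nil (s : St) : run s [] = s := rfl
@[simp] lemma run_cons (s : St) (b : Bool) (w : List Bool) : run s (b :: w) = run (stp b s) w := rfl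
lemma run_append (s : St) (u v : List Bool) : run s (u ++ v) = run (run s u) v := by
  simp [run]

/-- The stopping condition that defines `tau`. -/
def Stopped (k : ℕ) (r : ℝ) (s : St) : Prop := s.2.2 = k ∨ s.1 ∈ bdry r

/-- The walk from `s` driven by the word does not stop strictly before the word is used up. -/
def NoStop (k : ℕ) (r : ℝ) : St → List Bool → Prop
  | _, [] => True
  | s, b :: w => ¬ Stopped k r s ∧ NoStop k r (stp b s) w

/-- The walk from `s` stops exactly when the word is used up. -/
def Stops (k : ℕ) (r : ℝ) : St → List Bool → Prop
  | s, [] => Stopped k r s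
  | s, b :: w => ¬ Stopped k r s ∧ Stops k r (stp b s) w

lemma stops_append {k : ℕ} {r : ℝ} (u v : List Bool) : ∀ s,
    Stops k r s (u ++ v) ↔ NoStop k r s u ∧ Stops k r (run s u) v := by
  induction u with
  | nil => intro s; simp [NoStop]
  | cons b u ih => intro s; simp [NoStop, Stops, ih, and_assoc]

/-- The walk from `s` driven by the word, including its starting point, avoids `B`. -/
def AllOut (B : Set Z2) : St → List Bool → Prop
  | s, [] => s.1 ∉ B
  | s, b :: w => s.1 ∉ B ∧ AllOut B (stp b s) w

/-- The walk from `s` driven by the word, including its starting point, stays in `B`. -/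
def AllIn (B : Set Z2) : St → List Bool → Prop
  | s, [] => s.1 ∈ B
  | s, b :: w => s.1 ∈ B ∧ AllIn B (stp b s) w

lemma AllOut.head {B : Set Z2} {s : St} {w : List Bool} (h : AllOut B s w) : s.1 ∉ B := by
  cases w with
  | nil => exact h
  | cons b w => exact h.1

lemma AllIn.head {B : Set Z2} {s : St} {w : List Bool} (h : AllIn B s w) : s.1 ∈ B := by
  cases w with
  | nil => exact h
  | cons b w => exact h.1

lemma AllOut.run_notMem {B : Set Z2} {a t : List Bool} : ∀ {s : St}, AllOut B s (a ++ t) →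
    (run s a).1 ∉ B := by
  induction a with
  | nil => intro s h; exact AllOut.head h
  | cons b a ih => intro s h; exact ih h.2

/-- Last-exit decomposition: a word whose walk meets `B` but ends outside splits at the last step
that leaves `B`. -/
lemma exists_last_exit {B : Set Z2} (w : List Bool) : ∀ s : St, ¬ AllOut B s w → (run s w).1 ∉ B →
    ∃ u b v, w = u ++ b :: v ∧ (run s u).1 ∈ B ∧ AllOut B (stp b (run s u)) v := by
  induction w with
  | nil => intro s h1 h2; exact absurd h2 h1
  | cons c w ih =>
    intro s h1 h2
    by_cases h : AllOut B (stp c s) w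
    · refine ⟨[], c, w, rfl, ?_, h⟩
      by_contra hs
      exact h1 ⟨hs, h⟩
    · obtain ⟨u, b, v, rfl, hu, hv⟩ := ih _ h h2
      exact ⟨c :: u, b, v, rfl, hu, hv⟩

/-- The last exit from `B` determines the splitting of a word. -/
lemma last_exit_unique {B : Set Z2} {s : St} {u₁ u₂ v₁ v₂ : List Bool} {b₁ b₂ : Bool}
    (h : u₁ ++ b₁ :: v₁ = u₂ ++ b₂ :: v₂)
    (hu₁ : (run s u₁).1 ∈ B) (hv₁ : AllOut B (stp b₁ (run s u₁)) v₁)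
    (hu₂ : (run s u₂).1 ∈ B) (hv₂ : AllOut B (stp b₂ (run s u₂)) v₂) :
    u₁ = u₂ ∧ b₁ = b₂ ∧ v₁ = v₂ := by
  rcases List.append_eq_append_iff.1 h with ⟨a, rfl, ha⟩ | ⟨a, rfl, ha⟩
  · cases a with
    | nil => simpa using ha
    | cons c a =>
      simp only [List.cons_append, List.cons.injEq] at ha
      obtain ⟨rfl, rfl⟩ := ha
      rw [run_append] at hu₂
      exact absurd hu₂ (AllOut.run_notMem (a := a) hv₁)
  · cases a with
    | nil => simpa [eq_comm] using ha
    | cons c a =>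
      simp only [List.cons_append, List.cons.injEq] at ha
      obtain ⟨rfl, rfl⟩ := ha
      rw [run_append] at hu₁
      exact absurd hu₁ (AllOut.run_notMem (a := a) hv₂)

/-- Two states agree outside `B`: same position, same number of returns, same labels off `B`. -/
def Agree (B : Set Z2) (s s' : St) : Prop :=
  s.1 = s'.1 ∧ s.2.2 = s'.2.2 ∧ ∀ z, z ∉ B → s.2.1 z = s'.2.1 z

lemma Agree.stp {B : Set Z2} {s s' : St} (h : Agree B s s') (hl : s.2.1 s.1 = s'.2.1 s.1)
    (b : Bool) : Agree B (stp b s) (stp b s') := by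
  obtain ⟨p, ζ, j⟩ := s
  obtain ⟨p', ζ', j'⟩ := s'
  obtain ⟨h1, h2, h3⟩ := h
  dsimp only at h1 h2 h3 hl
  subst h1 h2
  refine ⟨?_, ?_, ?_⟩
  · simp [HV.stp, hl]
  · simp [HV.stp, hl]
  · intro z hz
    by_cases hzp : z = p
    · subst hzp; simp [HV.stp, hl]
    · simp [HV.stp, hzp, h3 z hz]

/-- As long as it stays outside `B`, the walk does not see the labels in `B`. -/
lemma Agree.stops {k : ℕ} {r : ℝ} {B : Set Z2} (v : List Bool) : ∀ {s s' : St}, Agree B s s' →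
    AllOut B s v → Stops k r s v → Stops k r s' v := by
  induction v with
  | nil =>
    intro s s' h _ h2
    unfold Stops Stopped at *
    rwa [← h.1, ← h.2.1]
  | cons b v ih =>
    intro s s' h h1 h2
    refine ⟨?_, ih (h.stp (h.2.2 _ h1.1) b) h1.2 h2.2⟩
    have := h2.1
    unfold Stopped at *
    rwa [← h.1, ← h.2.1]

lemma Agree.allOut {B : Set Z2} (v : List Bool) : ∀ {s s' : St}, Agree B s s' →
    AllOut B s v → AllOut B s' v := by
  induction v with
  | nil => intro s s' h h1; unfold AllOut at *; rwa [← h.1]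
  | cons b v ih =>
    intro s s' h h1
    exact ⟨h.1 ▸ h1.1, ih (h.stp (h.2.2 _ h1.1) b) h1.2⟩

lemma AllOut.label {B : Set Z2} {x : Z2} (hx : x ∈ B) (v : List Bool) : ∀ {s : St},
    AllOut B s v → (run s v).2.1 x = s.2.1 x := by
  induction v with
  | nil => intro s _; rfl
  | cons b v ih =>
    intro s h
    rw [run_cons, ih h.2]
    have : x ≠ s.1 := fun hh => h.1 (hh ▸ hx)
    simp [stp, this]

/-- The walk can only stop at the origin or on the boundary, unless it is stopped at the start. -/
lemma stops_end {k : ℕ} {r : ℝ} (w : List Bool) : ∀ s : St, Stops k r s w →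
    (Stopped k r s → s.1 = (0, 0) ∨ s.1 ∈ bdry r) →
    (run s w).1 = (0, 0) ∨ (run s w).1 ∈ bdry r := by
  induction w with
  | nil => intro s h1 h2; exact h2 h1
  | cons b w ih =>
    intro s h1 h2
    refine ih _ h1.2 fun h => ?_
    rcases h with h | h
    · left
      by_contra hne
      apply h1.1
      left
      have hne' : s.1 + dir (!s.2.1 s.1) b ≠ (0, 0) := hne
      simpa [stp, hne'] using h
    · exact Or.inr h

/-- While the walk stays in a region free of the origin and of the boundary, it does not stop. -/
lemma AllIn.noStop {k : ℕ} {r : ℝ} {B : Set Z2} (hB : ∀ z ∈ B, z ≠ (0, 0) ∧ z ∉ bdry r)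
    (l : List Bool) : ∀ {s : St}, AllIn B s l → s.2.2 ≠ k → NoStop k r s l := by
  induction l with
  | nil => intro s _ _; trivial
  | cons b l ih =>
    intro s h hk
    refine ⟨?_, ih h.2 ?_⟩
    · rintro (h' | h')
      · exact hk h'
      · exact (hB _ h.1).2 h'
    · have : s.1 + dir (!s.2.1 s.1) b ≠ (0, 0) := (hB _ (AllIn.head h.2)).1
      simpa [stp, this] using hk

/-! ### The local loop that flips the label of `x` -/

/-- The `3 × 3` block of lattice points centred at `x`. -/
def block (x : Z2) : Set Z2 := {z | |z.1 - x.1| ≤ 1 ∧ |z.2 - x.2| ≤ 1}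

/-- Bit `i` of the natural number `l`, written with kernel-accelerated operations. -/
def bt (l i : ℕ) : Bool := Nat.beq (Nat.land (Nat.shiftRight l i) 1) 1

/-- Application of `f` to a number that is first evaluated to a literal. -/
def force {α : Type} (f : ℕ → α) (n : ℕ) : α := Nat.rec (f 0) (fun m _ => f (Nat.succ m)) n

/-- Depth-first search for a loop inside a `3 × 3` block. The nine sites are numbered
`i = 3 * (row) + column` (the centre is `4`) and the bits of `l` are their labels. The search
succeeds if from site `i` with labels `l` the walker can, in fewer than `n` steps inside the block,
reach site `i0` with the label of `i0` as in `l0` and the label of the centre different from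
`l0`. -/
def reach (i0 l0 : ℕ) : ℕ → ℕ → ℕ → Bool
  | 0, _, _ => false
  | n + 1, i, l =>
     cond (cond (Nat.beq i i0)
       (cond (Bool.xor (bt l i0) (bt l0 i0)) false (Bool.xor (bt l 4) (bt l0 4))) false) true
     (force (fun l' => cond (bt l i)
       (cond (cond (Nat.blt (Nat.mod i 3) 2) (reach i0 l0 n (Nat.add i 1) l') false) true
         (cond (Nat.blt 0 (Nat.mod i 3)) (reach i0 l0 n (Nat.sub i 1) l') false))
       (cond (cond (Nat.blt i 6) (reach i0 l0 n (Nat.add i 3) l') false) true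
         (cond (Nat.ble 3 i) (reach i0 l0 n (Nat.sub i 3) l') false))) (Nat.xor l (Nat.pow 2 i)))

/-- The search succeeds from site `i0` for all label patterns below the second argument. The bound
`15` on the length suffices for every ring site and every pattern. -/
def reachAll (i0 : ℕ) : ℕ → Bool
  | 0 => true
  | l + 1 => cond (reach i0 l 15 i0 l) (reachAll i0 l) false

lemma reachAll_spec {i0 : ℕ} : ∀ N, reachAll i0 N = true → ∀ l < N, reach i0 l 15 i0 l = true := by
  intro N
  induction N with
  | zero => intro _ l hl; omega
  | succ N ih =>
    intro h l hl
    have h' : cond (reach i0 N 15 i0 N) (reachAll i0 N) false = true := h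
    cases hr : reach i0 N 15 i0 N
    · rw [hr] at h'; simp at h'
    · rw [hr, cond_true] at h'
      rcases Nat.lt_succ_iff_lt_or_eq.1 hl with hl | rfl
      · exact ih h' l hl
      · exact hr

set_option maxRecDepth 100000 in
/-- Evaluated in the kernel, as are its two companions: the search is run for the `2 ^ 9` label
patterns and one exit site of each kind. The remaining exit sites are reflections of these; the two
kinds of side site are not exchanged by a reflection and are searched separately. -/
lemma reachAll_corner : reachAll 8 512 = true := by decide +kernel
set_option maxRecDepth 100000 in
lemma reachAll_side : reachAll 7 512 = true := by decide +kernel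
set_option maxRecDepth 100000 in
lemma reachAll_side' : reachAll 5 512 = true := by decide +kernel

lemma bt_eq (l i : ℕ) : bt l i = l.testBit i := by
  have h : Nat.land (Nat.shiftRight l i) 1 = (l >>> i) % 2 := Nat.and_one_is_mod _
  rw [bt, h, Nat.testBit_eq_decide_div_mod_eq, Nat.shiftRight_eq_div_pow]
  rcases Nat.mod_two_eq_zero_or_one (l / 2 ^ i) with h | h <;> rw [h] <;> rfl

lemma force_eq {α : Type} (f : ℕ → α) (n : ℕ) : force f n = f n := by
  cases n <;> rfl

/-- The site numbered `i` in the block around `x`, up to the reflections `σ₁, σ₂ = ±1` of the two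
axes. -/
def site (x : Z2) (σ₁ σ₂ : ℤ) (i : ℕ) : Z2 :=
  (x.1 + σ₁ * (((i / 3 : ℕ) : ℤ) - 1), x.2 + σ₂ * (((i % 3 : ℕ) : ℤ) - 1))

/-- The walker is at site `i` and the bits of `l` are the labels in the block. -/
def Encodes (x : Z2) (σ₁ σ₂ : ℤ) (s : St) (i l : ℕ) : Prop :=
  i < 9 ∧ s.1 = site x σ₁ σ₂ i ∧ ∀ j < 9, s.2.1 (site x σ₁ σ₂ j) = bt l j

lemma site_inj {x : Z2} {σ₁ σ₂ : ℤ} (h₁ : σ₁ = 1 ∨ σ₁ = -1) (h₂ : σ₂ = 1 ∨ σ₂ = -1) {i j : ℕ} :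
    site x σ₁ σ₂ i = site x σ₁ σ₂ j ↔ i = j := by
  constructor
  · intro h
    simp only [site, Prod.mk.injEq] at h
    rcases h₁ with rfl | rfl <;> rcases h₂ with rfl | rfl <;> omega
  · rintro rfl; rfl

lemma site_mem {x : Z2} {σ₁ σ₂ : ℤ} (h₁ : σ₁ = 1 ∨ σ₁ = -1) (h₂ : σ₂ = 1 ∨ σ₂ = -1) {i : ℕ}
    (hi : i < 9) : site x σ₁ σ₂ i ∈ block x := by
  simp only [site, block, Set.mem_ofPred_eq, add_sub_cancel_left]
  rcases h₁ with rfl | rfl <;> rcases h₂ with rfl | rfl <;> simp only [abs_le] <;> omega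

lemma encodes_stp {x : Z2} {σ₁ σ₂ : ℤ} (h₁ : σ₁ = 1 ∨ σ₁ = -1) (h₂ : σ₂ = 1 ∨ σ₂ = -1) {s : St}
    {i l i' : ℕ} (h : Encodes x σ₁ σ₂ s i l) (hi' : i' < 9) (b : Bool)
    (hd : site x σ₁ σ₂ i' = site x σ₁ σ₂ i + dir (!bt l i) b) :
    Encodes x σ₁ σ₂ (stp b s) i' (Nat.xor l (Nat.pow 2 i)) := by
  obtain ⟨hi, hp, hl⟩ := h
  have hlab : s.2.1 s.1 = bt l i := by rw [hp]; exact hl i hi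
  refine ⟨hi', ?_, ?_⟩
  · simp only [stp]; rw [hlab, hp, hd]
  · intro j hj
    have hx : (Nat.xor l (Nat.pow 2 i)).testBit j = (l.testBit j ^^ decide (i = j)) := by
      change (l ^^^ 2 ^ i).testBit j = _
      rw [Nat.testBit_xor, Nat.testBit_two_pow]
    simp only [stp, hp]
    rw [bt_eq, hx, ← bt_eq]
    by_cases hji : j = i
    · subst hji
      rw [Function.update_self, hl j hj]
      simp
    · rw [Function.update_of_ne (by rw [Ne, site_inj h₁ h₂]; exact hji), hl j hj]
      simp [Ne.symm hji]

/-- What the inserted loop achieves: from `s` the word stays in the block, leaves the number of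
returns and all labels outside unchanged, and comes to the site `p` with the prescribed labels at
`p` and at the centre. -/
def LoopTo (x : Z2) (s : St) (p : Z2) (lp lx : Bool) (w : List Bool) : Prop :=
  AllIn (block x) s w ∧ (run s w).1 = p ∧ (run s w).2.1 p = lp ∧ (run s w).2.1 x = lx ∧
    ((0, 0) ∉ block x → (run s w).2.2 = s.2.2) ∧
    ∀ z, z ∉ block x → (run s w).2.1 z = s.2.1 z

lemma LoopTo.cons {x : Z2} {s : St} {p : Z2} {lp lx : Bool} {w : List Bool} {b : Bool}
    (hs : s.1 ∈ block x) (h : LoopTo x (stp b s) p lp lx w) : LoopTo x s p lp lx (b :: w) := by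
  obtain ⟨h1, h2, h3, h4, h5, h6⟩ := h
  refine ⟨⟨hs, h1⟩, h2, h3, h4, fun h0 => ?_, fun z hz => ?_⟩
  · rw [run_cons, h5 h0]
    have : s.1 + dir (!s.2.1 s.1) b ≠ (0, 0) := fun hh => h0 (hh ▸ (AllIn.head h1))
    simp [stp, this]
  · rw [run_cons, h6 z hz]
    have : z ≠ s.1 := fun hh => hz (hh ▸ hs)
    simp [stp, this]

/-- A successful search yields the coin word of an actual loop. -/
lemma reach_sound {x : Z2} {σ₁ σ₂ : ℤ} (h₁ : σ₁ = 1 ∨ σ₁ = -1) (h₂ : σ₂ = 1 ∨ σ₂ = -1)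
    {i0 l0 : ℕ} (n : ℕ) : ∀ (s : St) (i l : ℕ), Encodes x σ₁ σ₂ s i l →
    reach i0 l0 n i l = true → ∃ w : List Bool, w.length < n ∧
      LoopTo x s (site x σ₁ σ₂ i0) (bt l0 i0) (!bt l0 4) w := by
  induction n with
  | zero => intro s i l _ h; simp [reach] at h
  | succ n ih =>
    intro s i l he h
    have hs : s.1 ∈ block x := by rw [he.2.1]; exact site_mem h₁ h₂ he.1
    have go : ∀ i', i' < 9 → (∃ b, site x σ₁ σ₂ i' = site x σ₁ σ₂ i + dir (!bt l i) b) →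
        reach i0 l0 n i' (Nat.xor l (Nat.pow 2 i)) = true → ∃ w : List Bool, w.length < n + 1 ∧
          LoopTo x s (site x σ₁ σ₂ i0) (bt l0 i0) (!bt l0 4) w := by
      rintro i' hi' ⟨b, hb⟩ hr
      obtain ⟨w, hw, hl⟩ := ih _ _ _ (encodes_stp h₁ h₂ he hi' b hb) hr
      exact ⟨b :: w, by simpa using hw, hl.cons hs⟩
    have hi9 := he.1
    rw [reach, force_eq] at h
    by_cases ht : cond (Nat.beq i i0)
       (cond (Bool.xor (bt l i0) (bt l0 i0)) false (Bool.xor (bt l 4) (bt l0 4))) false = true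
    · obtain ⟨hi, hl⟩ : i = i0 ∧ cond (Bool.xor (bt l i0) (bt l0 i0)) false
          (Bool.xor (bt l 4) (bt l0 4)) = true := by
        cases hb : Nat.beq i i0
        · rw [hb] at ht; simp at ht
        · rw [hb] at ht; exact ⟨Nat.eq_of_beq_eq_true hb, ht⟩
      subst hi
      have hx : site x σ₁ σ₂ 4 = x := by simp [site]
      have hl4 := he.2.2 4 (by norm_num)
      rw [hx] at hl4
      refine ⟨[], by simp, hs, he.2.1, ?_, ?_, fun _ => rfl, fun _ _ => rfl⟩
      · rw [run_nil, he.2.2 i he.1]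
        revert hl
        cases bt l i <;> cases bt l0 i <;> simp
      · rw [run_nil, hl4]
        revert hl
        cases bt l i <;> cases bt l0 i <;> cases bt l 4 <;> cases bt l0 4 <;> simp
    · rw [Bool.not_eq_true] at ht
      rw [ht, cond_false] at h
      have split : ∀ {a b c d : Bool}, cond (cond a b false) true (cond c d false) = true →
          (a = true ∧ b = true) ∨ (c = true ∧ d = true) := by decide
      have hsite : ∀ i' : ℕ, site x σ₁ σ₂ i' - site x σ₁ σ₂ i =
          (σ₁ * (((i' / 3 : ℕ) : ℤ) - ((i / 3 : ℕ) : ℤ)),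
            σ₂ * (((i' % 3 : ℕ) : ℤ) - ((i % 3 : ℕ) : ℤ))) := by
        intro i'; simp only [site, Prod.mk_sub_mk, Prod.mk.injEq]; constructor <;> ring
      cases hb : bt l i
      · rw [hb, cond_false] at h
        rcases split h with ⟨ha, hr⟩ | ⟨ha, hr⟩
        · rw [Nat.blt_eq] at ha
          refine go _ (by simp; omega) ?_ hr
          simp only [← sub_eq_iff_eq_add', hsite, hb, Nat.add_eq]
          rw [show (i + 3) / 3 = i / 3 + 1 by omega, show (i + 3) % 3 = i % 3 by omega]
          rcases h₁ with rfl | rfl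
          · exact ⟨true, by simp [dir]⟩
          · exact ⟨false, by simp [dir]⟩
        · have ha := Nat.le_of_ble_eq_true ha
          refine go _ (by simp; omega) ?_ hr
          simp only [← sub_eq_iff_eq_add', hsite, hb, Nat.sub_eq]
          rw [show i / 3 = (i - 3) / 3 + 1 by omega, show (i - 3) % 3 = i % 3 by omega]
          rcases h₁ with rfl | rfl
          · exact ⟨false, by simp [dir]⟩
          · exact ⟨true, by simp [dir]⟩
      · rw [hb, cond_true] at h
        rcases split h with ⟨ha, hr⟩ | ⟨ha, hr⟩
        · rw [Nat.blt_eq] at ha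
          have ha : i % 3 < 2 := ha
          refine go _ (by simp; omega) ?_ hr
          simp only [← sub_eq_iff_eq_add', hsite, hb, Nat.add_eq]
          rw [show (i + 1) / 3 = i / 3 by omega, show (i + 1) % 3 = i % 3 + 1 by omega]
          rcases h₂ with rfl | rfl
          · exact ⟨true, by simp [dir]⟩
          · exact ⟨false, by simp [dir]⟩
        · rw [Nat.blt_eq] at ha
          have ha : 0 < i % 3 := ha
          refine go _ (by simp; omega) ?_ hr
          simp only [← sub_eq_iff_eq_add', hsite, hb, Nat.sub_eq]
          rw [show (i - 1) / 3 = i / 3 by omega, show i % 3 = (i - 1) % 3 + 1 by omega]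
          rcases h₂ with rfl | rfl
          · exact ⟨false, by simp [dir]⟩
          · exact ⟨true, by simp [dir]⟩

/-- Any nine labels are the bits of some number below `512`. -/
lemma exists_encoding (f : ℕ → Bool) : ∃ l < 512, ∀ j < 9, bt l j = f j := by
  refine ⟨Nat.ofBits fun i : Fin 9 => f i, Nat.ofBits_lt_two_pow _, fun j hj => ?_⟩
  rw [bt_eq, Nat.testBit_ofBits_lt _ _ hj]

/-- From any ring site of the block there is a loop of length at most `14` inside the block that
restores the label of that site and flips the label of the centre. -/
lemma exists_loop {x : Z2} (s : St) (hs : s.1 ∈ block x) (hx : s.1 ≠ x) :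
    ∃ w : List Bool, w.length < 15 ∧ LoopTo x s s.1 (s.2.1 s.1) (!s.2.1 x) w := by
  have main : ∀ i0, i0 < 9 → reachAll i0 512 = true → ∀ σ₁ σ₂ : ℤ, (σ₁ = 1 ∨ σ₁ = -1) →
      (σ₂ = 1 ∨ σ₂ = -1) → s.1 = site x σ₁ σ₂ i0 →
      ∃ w : List Bool, w.length < 15 ∧ LoopTo x s s.1 (s.2.1 s.1) (!s.2.1 x) w := by
    intro i0 hi0 hr σ₁ σ₂ h₁ h₂ hp
    obtain ⟨l, hl, hb⟩ := exists_encoding fun j => s.2.1 (site x σ₁ σ₂ j)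
    obtain ⟨w, hw, hloop⟩ := reach_sound h₁ h₂ 15 s i0 l
      ⟨hi0, hp, fun j hj => (hb j hj).symm⟩ (reachAll_spec 512 hr l hl)
    have hx4 : site x σ₁ σ₂ 4 = x := by simp [site]
    rw [hb i0 hi0, hb 4 (by norm_num), hx4, ← hp] at hloop
    exact ⟨w, hw, hloop⟩
  obtain ⟨⟨p1, p2⟩, ζ, j⟩ := s
  obtain ⟨x1, x2⟩ := x
  simp only [block, Set.mem_ofPred_eq, abs_le, Ne, Prod.mk.injEq] at hs hx
  simp only [site, Prod.mk.injEq] at main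
  have corner := main 8 (by norm_num) reachAll_corner
  have side := main 7 (by norm_num) reachAll_side
  have side' := main 5 (by norm_num) reachAll_side'
  norm_num at corner side side'
  by_cases c1 : p1 = x1
  · by_cases c2 : p2 < x2
    · exact side' 1 (-1) (Or.inl rfl) (Or.inr rfl) (by omega) (by omega)
    · exact side' 1 1 (Or.inl rfl) (Or.inl rfl) (by omega) (by omega)
  · by_cases c3 : p2 = x2
    · by_cases c2 : p1 < x1
      · exact side (-1) 1 (Or.inr rfl) (Or.inl rfl) (by omega) (by omega)
      · exact side 1 1 (Or.inl rfl) (Or.inl rfl) (by omega) (by omega)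
    · by_cases c2 : p1 < x1
      · by_cases c4 : p2 < x2
        · exact corner (-1) (-1) (Or.inr rfl) (Or.inr rfl) (by omega) (by omega)
        · exact corner (-1) 1 (Or.inr rfl) (Or.inl rfl) (by omega) (by omega)
      · by_cases c4 : p2 < x2
        · exact corner 1 (-1) (Or.inl rfl) (Or.inr rfl) (by omega) (by omega)
        · exact corner 1 1 (Or.inl rfl) (Or.inl rfl) (by omega) (by omega)

end HV

/-! ### Comparing the two possible final labels for fixed initial labels -/

namespace HV

/-- The probability that the fair coin flips start with a word of `S`, counted with multiplicity;
it is an honest probability when no word of `S` extends another. -/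
noncomputable def mass (S : Set (List Bool)) : ℝ≥0∞ :=
  ∑' w : S, (2 : ℝ≥0∞)⁻¹ ^ (w : List Bool).length

lemma mass_mono {S T : Set (List Bool)} (h : S ⊆ T) : mass S ≤ mass T :=
  ENNReal.tsum_mono_subtype (fun w : List Bool => (2 : ℝ≥0∞)⁻¹ ^ w.length) h

lemma mass_union_le (S T : Set (List Bool)) : mass (S ∪ T) ≤ mass S + mass T :=
  ENNReal.tsum_union_le (fun w : List Bool => (2 : ℝ≥0∞)⁻¹ ^ w.length) S T

/-- An injection that lengthens every word by `n` letters costs a factor `2 ^ n`. -/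
lemma mass_le_of_injOn {S T : Set (List Bool)} (ψ : List Bool → List Bool) (n : ℕ)
    (hmaps : ∀ w ∈ S, ψ w ∈ T) (hinj : Set.InjOn ψ S)
    (hlen : ∀ w ∈ S, (ψ w).length = w.length + n) : mass S ≤ 2 ^ n * mass T := by
  have h1 : mass S = ∑' w : S, 2 ^ n * (2 : ℝ≥0∞)⁻¹ ^ (ψ w).length := by
    refine tsum_congr fun w => ?_
    rw [hlen w w.2, pow_add, mul_comm ((2 : ℝ≥0∞)⁻¹ ^ (w : List Bool).length), ← mul_assoc,
      ← mul_pow, ENNReal.mul_inv_cancel (by norm_num) (by norm_num), one_pow, one_mul]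
  rw [h1, ENNReal.tsum_mul_left]
  gcongr
  exact ENNReal.tsum_comp_le_tsum_of_injective
    (f := fun w : S => (⟨ψ w, hmaps w w.2⟩ : T))
    (fun a b h => Subtype.ext (hinj a.2 b.2 (congrArg Subtype.val h)))
    (fun w : T => (2 : ℝ≥0∞)⁻¹ ^ (w : List Bool).length)

/-- The initial state with labels `ρ`. -/
def st0 (ρ : Config) : St := ((0, 0), ρ, 0)

/-- The coin words along which the walk with initial labels `ρ` stops, with final label `β`
at `x`. -/
def finalWords (k : ℕ) (r : ℝ) (x : Z2) (ρ : Config) (β : Bool) : Set (List Bool) :=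
  {w | Stops k r (st0 ρ) w ∧ (run (st0 ρ) w).2.1 x = β}

/-- The initial labels with the label of `x` flipped. -/
def flipAt (x : Z2) (ρ : Config) : Config := Function.update ρ x (!ρ x)

/-- The hypothesis `x ∈ B_{r-3} \ B_3` leaves room for the block around `x`. -/
lemma block_avoids {x : Z2} {r : ℝ} (hx : x ∈ ball (r - 3) \ ball 3) :
    ∀ z ∈ block x, z ≠ (0, 0) ∧ z ∉ bdry r := by
  obtain ⟨h1, h2⟩ := hx
  simp only [ball, Set.mem_ofPred_eq, norm2, not_lt] at h1 h2
  rintro ⟨z1, z2⟩ hz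
  obtain ⟨x1, x2⟩ := x
  simp only [block, Set.mem_ofPred_eq] at hz h1 h2
  have hz1 : |(z1 : ℝ) - x1| ≤ 1 := by exact_mod_cast hz.1
  have hz2 : |(z2 : ℝ) - x2| ≤ 1 := by exact_mod_cast hz.2
  rw [abs_le] at hz1 hz2
  set N := √((x1 : ℝ) ^ 2 + (x2 : ℝ) ^ 2) with hN
  have hNsq : N ^ 2 = (x1 : ℝ) ^ 2 + (x2 : ℝ) ^ 2 := Real.sq_sqrt (by positivity)
  constructor
  · rintro h
    simp only [Prod.mk.injEq] at h
    obtain ⟨rfl, rfl⟩ := h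
    push_cast at hz1 hz2
    nlinarith
  · rintro ⟨hb, -⟩
    apply hb
    simp only [ball, Set.mem_ofPred_eq, norm2]
    have hN0 : 0 ≤ N := Real.sqrt_nonneg _
    have ha1 : |(x1 : ℝ)| ≤ N := Real.abs_le_sqrt (by nlinarith)
    have ha2 : |(x2 : ℝ)| ≤ N := Real.abs_le_sqrt (by nlinarith)
    have e1 : (x1 : ℝ) * (z1 - x1) ≤ N := by
      calc (x1 : ℝ) * (z1 - x1) ≤ |(x1 : ℝ) * (z1 - x1)| := le_abs_self _
        _ = |(x1 : ℝ)| * |(z1 : ℝ) - x1| := abs_mul _ _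
        _ ≤ N * 1 := mul_le_mul ha1 (abs_le.2 hz1) (abs_nonneg _) hN0
        _ = N := mul_one _
    have e2 : (x2 : ℝ) * (z2 - x2) ≤ N := by
      calc (x2 : ℝ) * (z2 - x2) ≤ |(x2 : ℝ) * (z2 - x2)| := le_abs_self _
        _ = |(x2 : ℝ)| * |(z2 : ℝ) - x2| := abs_mul _ _
        _ ≤ N * 1 := mul_le_mul ha2 (abs_le.2 hz2) (abs_nonneg _) hN0
        _ = N := mul_one _
    have e3 : ((z1 : ℝ) - x1) ^ 2 ≤ 1 := by nlinarith
    have e4 : ((z2 : ℝ) - x2) ^ 2 ≤ 1 := by nlinarith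
    refine lt_of_le_of_lt ?_ (show N + 3 < r by linarith)
    refine Real.sqrt_le_iff.2 ⟨by linarith, ?_⟩
    nlinarith

/-- Words whose walk never meets the block around `x` correspond under flipping the initial label
of `x`. -/
lemma unvisited_flip (k : ℕ) (r : ℝ) (x : Z2) (ρ : Config) (β : Bool) :
    finalWords k r x ρ β ∩ {w | AllOut (block x) (st0 ρ) w} ⊆
      finalWords k r x (flipAt x ρ) (!β) := by
  rintro w ⟨⟨h1, h2⟩, h3⟩
  have hxx : x ∈ block x := by simp [block]
  have hag : Agree (block x) (st0 ρ) (st0 (flipAt x ρ)) := by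
    refine ⟨rfl, rfl, fun z hz => ?_⟩
    have : z ≠ x := fun h => hz (h ▸ hxx)
    simp [st0, flipAt, this]
  refine ⟨hag.stops w h3 h1, ?_⟩
  rw [AllOut.label hxx w h3] at h2
  rw [AllOut.label hxx w (hag.allOut w h3)]
  simp [st0, flipAt] at h2 ⊢
  exact h2

/-- Insertion of a loop just before the last exit from the block around `x` turns the final label
`β` into `!β`. -/
lemma exists_insertion {k : ℕ} {r : ℝ} {x : Z2} (hx : ∀ z ∈ block x, z ≠ (0, 0) ∧ z ∉ bdry r)
    {ρ : Config} {β : Bool} {w : List Bool} (hw : w ∈ finalWords k r x ρ β)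
    (hvis : ¬ AllOut (block x) (st0 ρ) w) :
    ∃ u b v l, w = u ++ b :: v ∧ l.length < 15 ∧ (run (st0 ρ) u).1 ∈ block x ∧
      AllOut (block x) (stp b (run (st0 ρ) u)) v ∧ (run (st0 ρ) (u ++ l)).1 ∈ block x ∧
      AllOut (block x) (stp b (run (st0 ρ) (u ++ l))) v ∧
      (u ++ l) ++ b :: v ∈ finalWords k r x ρ (!β) := by
  have hxx : x ∈ block x := by simp [block]
  obtain ⟨hst, hlab⟩ := hw
  have hend : (run (st0 ρ) w).1 ∉ block x := by
    intro h
    rcases stops_end w _ hst (fun _ => Or.inl rfl) with h' | h'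
    · exact (hx _ h).1 h'
    · exact (hx _ h).2 h'
  obtain ⟨u, b, v, rfl, hu, hv⟩ := exists_last_exit w _ hvis hend
  rw [stops_append] at hst
  rw [run_append, run_cons, AllOut.label hxx v hv] at hlab
  set s := run (st0 ρ) u with hs
  -- a neighbour of the centre is in the block, so the exit site is not the centre
  have hsx : s.1 ≠ x := by
    intro h
    apply AllOut.head hv
    simp only [stp, block, Set.mem_ofPred_eq, dir, h]
    split_ifs <;> simp
  obtain ⟨l, hl, hin, h1, h2, h3, h4, h5⟩ := exists_loop s hu hsx
  have h00 : ((0, 0) : Z2) ∉ block x := fun h => (hx _ h).1 rfl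
  have hk : s.2.2 ≠ k := fun h => hst.2.1 (Or.inl h)
  have hag : Agree (block x) (stp b s) (stp b (run s l)) :=
    Agree.stp ⟨h1.symm, (h4 h00).symm, fun z hz => (h5 z hz).symm⟩ h2.symm b
  have hv' := hag.allOut v hv
  have hrun : run (st0 ρ) (u ++ l) = run s l := by rw [run_append]
  refine ⟨u, b, v, l, rfl, hl, hu, hv, by rw [hrun, h1]; exact hu, by rw [hrun]; exact hv', ?_, ?_⟩
  · rw [List.append_assoc, stops_append, stops_append]
    refine ⟨hst.1, hin.noStop hx l hk, ?_, hag.stops v hv hst.2.2⟩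
    rintro (h | h)
    · exact hk ((h4 h00) ▸ h)
    · rw [h1] at h; exact (hx _ hu).2 h
  · rw [run_append, hrun, run_cons, AllOut.label hxx v hv']
    have e1 : (stp b s).2.1 x = s.2.1 x := by simp [stp, Ne.symm hsx]
    have e2 : (stp b (run s l)).2.1 x = (run s l).2.1 x := by
      simp [stp, h1, Ne.symm hsx]
    rw [e2, h3, ← e1, hlab]

/-- For fixed initial labels, on visiting the block around `x` the two final labels have comparable
probabilities. For a given loop length `n` the insertion is injective, as the last exit of the new
word recovers the inserted loop, and it costs `2 ^ n`; the lengths `n < 15` sum to less than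
`2 ^ 15`. -/
lemma visited_le {k : ℕ} {r : ℝ} {x : Z2} (hx : ∀ z ∈ block x, z ≠ (0, 0) ∧ z ∉ bdry r)
    (ρ : Config) (β : Bool) :
    mass (finalWords k r x ρ β ∩ {w | ¬ AllOut (block x) (st0 ρ) w}) ≤
      2 ^ 15 * mass (finalWords k r x ρ (!β)) := by
  set S := finalWords k r x ρ β ∩ {w | ¬ AllOut (block x) (st0 ρ) w} with hS
  have hex : ∀ w, ∃ u b v l, w ∈ S → (w = u ++ b :: v ∧ l.length < 15 ∧
      (run (st0 ρ) u).1 ∈ block x ∧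
      AllOut (block x) (stp b (run (st0 ρ) u)) v ∧ (run (st0 ρ) (u ++ l)).1 ∈ block x ∧
      AllOut (block x) (stp b (run (st0 ρ) (u ++ l))) v ∧
      (u ++ l) ++ b :: v ∈ finalWords k r x ρ (!β)) := by
    intro w
    by_cases hw : w ∈ S
    · obtain ⟨u, b, v, l, h⟩ := exists_insertion hx hw.1 hw.2
      exact ⟨u, b, v, l, fun _ => h⟩
    · exact ⟨[], true, [], [], fun h => absurd h hw⟩
  choose u b v l h using hex
  have hcover : S ⊆ ⋃ n ∈ Finset.range 15, {w | w ∈ S ∧ (l w).length = n} := by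
    intro w hw
    simp only [Set.mem_iUnion, Finset.mem_range]
    exact ⟨(l w).length, (h w hw).2.1, hw, rfl⟩
  have hn : ∀ n, mass {w | w ∈ S ∧ (l w).length = n} ≤
      2 ^ n * mass (finalWords k r x ρ (!β)) := by
    intro n
    refine mass_le_of_injOn (fun w => (u w ++ l w) ++ b w :: v w) n ?_ ?_ ?_
    · rintro w ⟨hw, -⟩
      exact (h w hw).2.2.2.2.2.2
    · rintro w₁ ⟨hw₁, hn₁⟩ w₂ ⟨hw₂, hn₂⟩ heq
      obtain ⟨e₁, -, -, -, i₁, o₁, -⟩ := h w₁ hw₁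
      obtain ⟨e₂, -, -, -, i₂, o₂, -⟩ := h w₂ hw₂
      obtain ⟨hul, hb, hv⟩ := last_exit_unique heq i₁ o₁ i₂ o₂
      have := (List.append_inj' hul (hn₁.trans hn₂.symm)).1
      rw [e₁, e₂, this, hb, hv]
    · rintro w ⟨hw, hn⟩
      have e := congrArg List.length (h w hw).1
      simp only [List.length_append, List.length_cons] at e ⊢
      omega
  calc mass S ≤ mass (⋃ n ∈ Finset.range 15, {w | w ∈ S ∧ (l w).length = n}) := mass_mono hcover
    _ ≤ ∑ n ∈ Finset.range 15, mass {w | w ∈ S ∧ (l w).length = n} :=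
        ENNReal.tsum_biUnion_le (fun w : List Bool => (2 : ℝ≥0∞)⁻¹ ^ w.length) _ _
    _ ≤ ∑ n ∈ Finset.range 15, 2 ^ n * mass (finalWords k r x ρ (!β)) :=
        Finset.sum_le_sum fun n _ => hn n
    _ = (∑ n ∈ Finset.range 15, (2 : ℝ≥0∞) ^ n) * mass (finalWords k r x ρ (!β)) := by
        rw [Finset.sum_mul]
    _ ≤ 2 ^ 15 * mass (finalWords k r x ρ (!β)) := by
        gcongr
        simp only [Finset.sum_range_succ, Finset.sum_range_zero]
        norm_num

/-- Either the walk visits the block around `x`, and a loop is inserted, or it does not, and the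
initial label of `x` is flipped. -/
lemma mass_final_le {k : ℕ} {r : ℝ} {x : Z2} (hx : ∀ z ∈ block x, z ≠ (0, 0) ∧ z ∉ bdry r)
    (ρ : Config) (β : Bool) :
    mass (finalWords k r x ρ β) ≤ 2 ^ 15 * mass (finalWords k r x ρ (!β)) +
      mass (finalWords k r x (flipAt x ρ) (!β)) := by
  have hsplit : finalWords k r x ρ β ⊆
      (finalWords k r x ρ β ∩ {w | ¬ AllOut (block x) (st0 ρ) w}) ∪
      (finalWords k r x ρ β ∩ {w | AllOut (block x) (st0 ρ) w}) := by
    intro w hw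
    by_cases h : AllOut (block x) (st0 ρ) w
    · exact Or.inr ⟨hw, h⟩
    · exact Or.inl ⟨hw, h⟩
  exact (mass_mono hsplit).trans ((mass_union_le _ _).trans
    (add_le_add (visited_le hx ρ β) (mass_mono (unvisited_flip k r x ρ β))))

end HV

/-! ### The walk stops almost surely -/

namespace HV

lemma one_le_mass_of_stopped {k : ℕ} {r : ℝ} {s : St} (h : Stopped k r s) :
    1 ≤ mass {w | Stops k r s w} := by
  have := ENNReal.le_tsum
    (f := fun w : {w | Stops k r s w} => (2 : ℝ≥0∞)⁻¹ ^ (w : List Bool).length) ⟨[], h⟩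
  simpa [mass] using this

lemma mass_stops_step {k : ℕ} {r : ℝ} {s : St} (h : ¬ Stopped k r s) :
    2⁻¹ * mass {w | Stops k r (stp true s) w} + 2⁻¹ * mass {w | Stops k r (stp false s) w} ≤
      mass {w | Stops k r s w} := by
  have e : ∀ b : Bool, 2⁻¹ * mass {w | Stops k r (stp b s) w} =
      ∑' w : {w | Stops k r (stp b s) w}, (2 : ℝ≥0∞)⁻¹ ^ (b :: (w : List Bool)).length := by
    intro b
    rw [mass, ← ENNReal.tsum_mul_left]
    exact tsum_congr fun w => by rw [List.length_cons, pow_succ']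
  rw [e true, e false, add_comm, ← tsum_bool (f := fun b : Bool =>
    ∑' w : {w | Stops k r (stp b s) w}, (2 : ℝ≥0∞)⁻¹ ^ (b :: (w : List Bool)).length),
    ← ENNReal.tsum_sigma]
  refine ENNReal.tsum_comp_le_tsum_of_injective
    (f := fun p : (b : Bool) × {w | Stops k r (stp b s) w} =>
      (⟨p.1 :: p.2.1, h, p.2.2⟩ : {w | Stops k r s w})) ?_
    (fun w : {w | Stops k r s w} => (2 : ℝ≥0∞)⁻¹ ^ (w : List Bool).length)
  rintro ⟨b, w, hw⟩ ⟨b', w', hw'⟩ heq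
  obtain ⟨rfl, rfl⟩ := List.cons.inj (congrArg Subtype.val heq)
  rfl

open Classical in
/-- The probability that the walk from `s` does not stop during its first `n` steps. -/
noncomputable def surv (k : ℕ) (r : ℝ) : ℕ → St → ℝ
  | 0, _ => 1
  | n + 1, s => if Stopped k r s then 0 else
      (surv k r n (stp true s) + surv k r n (stp false s)) / 2

lemma surv_le_one (k : ℕ) (r : ℝ) (n : ℕ) : ∀ s, surv k r n s ≤ 1 := by
  induction n with
  | zero => intro s; exact le_rfl
  | succ n ih =>
    intro s
    rw [surv]
    split_ifs
    · norm_num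
    · linarith [ih (stp true s), ih (stp false s)]

lemma one_sub_surv_le (k : ℕ) (r : ℝ) (n : ℕ) : ∀ s,
    ENNReal.ofReal (1 - surv k r n s) ≤ mass {w | Stops k r s w} := by
  induction n with
  | zero => intro s; simp [surv]
  | succ n ih =>
    intro s
    rw [surv]
    split_ifs with h
    · simpa using one_le_mass_of_stopped h
    · refine le_trans ?_ (mass_stops_step h)
      have e : 1 - (surv k r n (stp true s) + surv k r n (stp false s)) / 2 =
          2⁻¹ * (1 - surv k r n (stp true s)) + 2⁻¹ * (1 - surv k r n (stp false s)) := by ring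
      have h2 : ENNReal.ofReal 2⁻¹ = 2⁻¹ := by
        rw [ENNReal.ofReal_inv_of_pos (by norm_num)]; norm_num
      rw [e]
      refine ENNReal.ofReal_add_le.trans ?_
      rw [ENNReal.ofReal_mul (by norm_num), ENNReal.ofReal_mul (by norm_num), h2]
      gcongr
      · exact ih _
      · exact ih _

/-- The squared Euclidean norm of a lattice point. -/
def sq (z : Z2) : ℝ := (z.1 : ℝ) ^ 2 + (z.2 : ℝ) ^ 2

lemma norm2_sq (z : Z2) : norm2 z ^ 2 = sq z := Real.sq_sqrt (by positivity)

lemma sq_le {r : ℝ} {z : Z2} (h : z ∈ ball r ∪ bdry r) : sq z ≤ (r + 1) ^ 2 := by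
  have key : ∀ y ∈ ball r, 0 ≤ norm2 y ∧ norm2 y < r := fun y hy => ⟨Real.sqrt_nonneg _, hy⟩
  rcases h with h | ⟨-, y, hzy, hy⟩
  · obtain ⟨h1, h2⟩ := key z h
    rw [← norm2_sq]
    nlinarith
  · obtain ⟨h1, h2⟩ := key y hy
    have e := norm2_sq y
    have a1 : |(y.1 : ℝ)| ≤ norm2 y := Real.abs_le_sqrt (by nlinarith [sq_nonneg (y.2 : ℝ)])
    have a2 : |(y.2 : ℝ)| ≤ norm2 y := Real.abs_le_sqrt (by nlinarith [sq_nonneg (y.1 : ℝ)])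
    rw [abs_le] at a1 a2
    have hcases : (z.1 = y.1 ∧ (z.2 = y.2 + 1 ∨ z.2 = y.2 - 1)) ∨
        (z.2 = y.2 ∧ (z.1 = y.1 + 1 ∨ z.1 = y.1 - 1)) := by
      unfold adj at hzy
      rcases abs_cases (z.1 - y.1) with h3 | h3 <;> rcases abs_cases (z.2 - y.2) with h4 | h4 <;>
        omega
    unfold sq at *
    rcases hcases with ⟨e1, e2 | e2⟩ | ⟨e1, e2 | e2⟩ <;> rw [e1, e2] <;> push_cast <;> nlinarith

lemma adj_stp (b : Bool) (s : St) : adj (stp b s).1 s.1 := by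
  rcases hb : (!s.2.1 s.1) <;> cases b <;> simp [stp, adj, dir, hb]

lemma stp_mem {r : ℝ} {s : St} (b : Bool) (h : s.1 ∈ ball r) : (stp b s).1 ∈ ball r ∪ bdry r := by
  by_cases h' : (stp b s).1 ∈ ball r
  · exact Or.inl h'
  · exact Or.inr ⟨h', s.1, adj_stp b s, h⟩

lemma sq_stp (s : St) : sq (stp true s).1 + sq (stp false s).1 = 2 * sq s.1 + 2 := by
  rcases hb : (!s.2.1 s.1) <;> simp [stp, sq, dir, hb] <;> ring

/-- The process `|Y_t|² - t` is a martingale and `|Y_t| ≤ r + 1`, so survival up to time `n` has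
probability `O(1 / n)`. -/
lemma mul_surv_le (k : ℕ) (r : ℝ) (n : ℕ) : ∀ s : St, s.1 ∈ ball r ∪ bdry r →
    n * surv k r n s ≤ (r + 1) ^ 2 - sq s.1 := by
  induction n with
  | zero => intro s hs; simpa using sq_le hs
  | succ n ih =>
    intro s hs
    rw [surv]
    split_ifs with h
    · simpa using sq_le hs
    · have hb : s.1 ∈ ball r := hs.resolve_right fun h' => h (Or.inr h')
      have h1 := ih _ (stp_mem true hb)
      have h2 := ih _ (stp_mem false hb)
      have h3 := surv_le_one k r n (stp true s)
      have h4 := surv_le_one k r n (stp false s)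
      have h5 := sq_stp s
      push_cast
      linarith

/-- The walk stops almost surely. -/
lemma one_le_mass_stops {k : ℕ} {r : ℝ} {s : St} (hs : s.1 ∈ ball r ∪ bdry r) :
    1 ≤ mass {w | Stops k r s w} := by
  have hle : ∀ᶠ n : ℕ in atTop,
      ENNReal.ofReal (1 - (r + 1) ^ 2 / n) ≤ mass {w | Stops k r s w} := by
    filter_upwards [eventually_gt_atTop 0] with n hn
    refine le_trans (ENNReal.ofReal_le_ofReal ?_) (one_sub_surv_le k r n s)
    have hn' : (0 : ℝ) < n := by exact_mod_cast hn
    have : 0 ≤ sq s.1 := by unfold sq; positivity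
    have h := mul_surv_le k r n s hs
    have : surv k r n s ≤ (r + 1) ^ 2 / n := by
      rw [le_div_iff₀ hn']; linarith
    linarith
  have ht : Tendsto (fun n : ℕ => ENNReal.ofReal (1 - (r + 1) ^ 2 / n)) atTop
      (nhds (ENNReal.ofReal (1 - 0))) :=
    (ENNReal.continuous_ofReal.tendsto _).comp
      (tendsto_const_nhds.sub (tendsto_const_div_atTop_nhds_zero_nat _))
  simpa using le_of_tendsto ht hle

end HV

/-! ### Coin words and trajectories -/

namespace HV

/-- The trajectory of the walk with initial labels `ρ` driven by the word `w`. -/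
def path (ρ : Config) (w : List Bool) : Path := fun s => (run (st0 ρ) (w.take (s + 1))).1

/-- The trajectories that follow the walk driven by `w` during its first `w.length` steps. -/
def cyl (ρ : Config) (w : List Bool) : Set Path := {y | ∀ s < w.length, y s = path ρ w s}

lemma mem_cyl_append {ρ : Config} {u v : List Bool} {y : Path} (h : y ∈ cyl ρ (u ++ v)) :
    y ∈ cyl ρ u := by
  intro s hs
  rw [h s (by rw [List.length_append]; omega), path, path,
    List.take_append_of_le_length (by omega)]

lemma cyl_last {ρ : Config} {u : List Bool} {b : Bool} {y : Path} (h : y ∈ cyl ρ (u ++ [b])) :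
    y u.length = (stp b (run (st0 ρ) u)).1 := by
  rw [h u.length (by simp), path, List.take_of_length_le (by simp), run_append]
  rfl

lemma noStop_append {k : ℕ} {r : ℝ} (u v : List Bool) : ∀ s,
    NoStop k r s (u ++ v) ↔ NoStop k r s u ∧ NoStop k r (run s u) v := by
  induction u with
  | nil => intro s; simp [NoStop]
  | cons b u ih => intro s; simp [NoStop, ih, and_assoc]

lemma noStop_snoc {k : ℕ} {r : ℝ} {s : St} {u : List Bool} {b : Bool}
    (h : NoStop k r s (u ++ [b])) : NoStop k r s u ∧ ¬ Stopped k r (run s u) := by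
  rw [noStop_append] at h
  exact ⟨h.1, h.2.1⟩

lemma Stops.noStop {k : ℕ} {r : ℝ} {s : St} {w : List Bool} (h : Stops k r s w) :
    NoStop k r s w ∧ Stopped k r (run s w) := by
  have := (stops_append w [] s).1 (by simpa using h)
  exact this

/-- How the number of returns changes in one step; the walk never stays put, so arriving at the
origin from the origin need not be considered. -/
lemma returns_succ (S : ℕ → State 1) (t : ℕ) :
    ((S t).1 0 ≠ (0, 0) → (S (t + 1)).1 0 = (0, 0) →
      returns 1 S (t + 1) = returns 1 S t + 1) ∧
    ((S (t + 1)).1 0 ≠ (0, 0) → returns 1 S (t + 1) = returns 1 S t) := by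
  unfold returns
  rw [Finset.card_filter, Finset.card_filter, Finset.sum_Icc_succ_top (by omega)]
  constructor
  · intro h1 h2; simp [h1, h2]
  · intro h1; simp [h1]

/-- Along a trajectory that follows `w`, the reconstructed states are those of the walk driven
by `w`. -/
lemma fseq_eq {k : ℕ} {r : ℝ} {ρ : Config} {y : Path} (w : List Bool) (hw : NoStop k r (st0 ρ) w)
    (hy : y ∈ cyl ρ w) :
    fseq 1 Nat.one_pos r ρ y w.length =
      (fun _ => (run (st0 ρ) w).1, (run (st0 ρ) w).2.1) := by
  induction w using List.reverseRecOn with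
  | nil => rfl
  | append_singleton u b ih =>
    obtain ⟨h1, h2⟩ := noStop_snoc hw
    have hnb : (run (st0 ρ) u).1 ∉ bdry r := fun h => h2 (Or.inr h)
    have hl := cyl_last hy
    rw [List.length_append, List.length_singleton, fseq, ih h1 (mem_cyl_append hy), hl, run_append]
    set s := run (st0 ρ) u
    simp only [fapply, hnb, if_false, apply', run_cons, run_nil]
    refine Prod.ext (funext fun i => ?_) ?_
    · simp [Function.update, Subsingleton.elim i (active 1 Nat.one_pos u.length)]
    · rcases hb : (!s.2.1 s.1) <;> cases b <;> simp [stp, dir, hb]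

lemma returns_eq {k : ℕ} {r : ℝ} {ρ : Config} {y : Path} (w : List Bool)
    (hw : NoStop k r (st0 ρ) w) (hy : y ∈ cyl ρ w) :
    returns 1 (fun u => fseq 1 Nat.one_pos r ρ y u) w.length = (run (st0 ρ) w).2.2 := by
  induction w using List.reverseRecOn with
  | nil => simp [returns, st0]
  | append_singleton u b ih =>
    obtain ⟨h1, h2⟩ := noStop_snoc hw
    have e1 := fseq_eq _ hw hy
    have e2 := fseq_eq _ h1 (mem_cyl_append hy)
    rw [List.length_append, List.length_singleton] at e1 ⊢
    have hsucc := returns_succ (fun t => fseq 1 Nat.one_pos r ρ y t) u.length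
    rw [ih h1 (mem_cyl_append hy)] at hsucc
    simp only [e1, e2, run_append] at hsucc
    rw [run_append]
    set s := run (st0 ρ) u
    simp only [run_cons, run_nil] at hsucc ⊢
    have hadj := adj_stp b s
    by_cases h0 : (stp b s).1 = (0, 0)
    · have hs : s.1 ≠ (0, 0) := by
        intro h; rw [h0, h] at hadj; simp [adj] at hadj
      have h0' : s.1 + dir (!s.2.1 s.1) b = (0, 0) := h0
      rw [hsucc.1 hs h0]
      simp [stp, h0']
    · have h0' : ¬ s.1 + dir (!s.2.1 s.1) b = (0, 0) := h0
      rw [hsucc.2 h0]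
      simp [stp, h0']

/-- The set of times in the definition of `tau` is nonempty here, so the infimum is a genuine
minimum. -/
lemma tau_eq {k : ℕ} {r : ℝ} {ρ : Config} {y : Path} {w : List Bool}
    (hw : Stops k r (st0 ρ) w) (hy : y ∈ cyl ρ w) : tau 1 Nat.one_pos r ρ k y = w.length := by
  have key : ∀ u, NoStop k r (st0 ρ) u → y ∈ cyl ρ u →
      ((returns 1 (fun u => fseq 1 Nat.one_pos r ρ y u) u.length = k ∨
        ∀ i, (fseq 1 Nat.one_pos r ρ y u.length).1 i ∈ bdry r) ↔ Stopped k r (run (st0 ρ) u)) := by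
    intro u h1 h2
    rw [returns_eq u h1 h2, fseq_eq u h1 h2]
    simp [Stopped]
  refine IsLeast.csInf_eq ⟨(key w hw.noStop.1 hy).2 hw.noStop.2, fun t ht => ?_⟩
  by_contra hlt
  push Not at hlt
  have hsplit : w = w.take t ++ w.drop t := (List.take_append_drop t w).symm
  have hlen : (w.take t).length = t := by rw [List.length_take]; omega
  obtain ⟨b, v, hv⟩ : ∃ b v, w.drop t = b :: v := by
    cases h : w.drop t with
    | nil => rw [List.drop_eq_nil_iff] at h; omega
    | cons b v => exact ⟨b, v, rfl⟩
  rw [hsplit, hv] at hw hy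
  rw [stops_append] at hw
  have := key _ hw.1 (mem_cyl_append hy)
  rw [hlen] at this
  exact hw.2.1 (this.1 ht)

lemma word_unique {ρ : Config} {y : Path} (w : List Bool) : ∀ w' : List Bool,
    w.length = w'.length → y ∈ cyl ρ w → y ∈ cyl ρ w' → w = w' := by
  induction w using List.reverseRecOn with
  | nil => intro w' h _ _; exact (List.length_eq_zero_iff.1 h.symm).symm
  | append_singleton u b ih =>
    intro w' hlen h1 h2
    rcases List.eq_nil_or_concat w' with rfl | ⟨u', b', rfl⟩
    · simp at hlen
    · rw [List.concat_eq_append] at *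
      have hl : u.length = u'.length := by simpa using hlen
      obtain rfl := ih u' hl (mem_cyl_append h1) (mem_cyl_append h2)
      have e := (cyl_last h1).symm.trans (cyl_last h2)
      set s := run (st0 ρ) u
      have : b = b' := by
        rcases hb : (!s.2.1 s.1) <;> cases b <;> cases b' <;> simp [stp, dir, hb] at e ⊢
      rw [this]

lemma stops_unique {k : ℕ} {r : ℝ} {ρ : Config} {y : Path} {w w' : List Bool}
    (hw : Stops k r (st0 ρ) w) (hw' : Stops k r (st0 ρ) w') (hy : y ∈ cyl ρ w)
    (hy' : y ∈ cyl ρ w') : w = w' :=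
  word_unique w w' ((tau_eq hw hy).symm.trans (tau_eq hw' hy')) hy hy'

/-- For `q = 1` each step of the frozen walk before stopping has probability `1 / 2`. -/
lemma prod_fweight {k : ℕ} {r : ℝ} {ρ : Config} {y : Path} (w : List Bool)
    (hw : NoStop k r (st0 ρ) w) (hy : y ∈ cyl ρ w) :
    ∏ s ∈ Finset.range w.length, fweight 1 1 r (fseq 1 Nat.one_pos r ρ y s)
      (active 1 Nat.one_pos s) (y s) = (2 : ℝ≥0∞)⁻¹ ^ w.length := by
  induction w using List.reverseRecOn with
  | nil => simp
  | append_singleton u b ih =>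
    obtain ⟨h1, h2⟩ := noStop_snoc hw
    have hnb : (run (st0 ρ) u).1 ∉ bdry r := fun h => h2 (Or.inr h)
    have h12 : ENNReal.ofReal (1 / 2) = 2⁻¹ := by
      rw [one_div, ENNReal.ofReal_inv_of_pos (by norm_num)]; norm_num
    rw [List.length_append, List.length_singleton, Finset.prod_range_succ,
      ih h1 (mem_cyl_append hy), pow_succ, fseq_eq u h1 (mem_cyl_append hy), cyl_last hy]
    congr 1
    set s := run (st0 ρ) u
    rw [← h12]
    rcases hb : s.2.1 s.1 <;> cases b <;>
      simp [fweight, weight, hnb, stp, dir, hb, sub_eq_add_neg]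

lemma measure_cyl {k : ℕ} {r : ℝ} {ρ : Config} {μ : Measure Path}
    (hμ : IsFrozenLaw 1 1 Nat.one_pos r ρ μ) {w : List Bool} (hw : Stops k r (st0 ρ) w) :
    μ (cyl ρ w) = (2 : ℝ≥0∞)⁻¹ ^ w.length :=
  (hμ w.length (path ρ w)).trans (prod_fweight w hw.noStop.1 fun _ _ => rfl)

lemma measurableSet_cyl (ρ : Config) (w : List Bool) : MeasurableSet (cyl ρ w) := by
  have : cyl ρ w = ⋂ s ∈ Set.Iio w.length, (fun y : Path => y s) ⁻¹' {path ρ w s} := by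
    ext y; simp [cyl]
  rw [this]
  exact MeasurableSet.biInter (Set.to_countable _) fun s _ =>
    measurable_pi_apply s (MeasurableSet.of_discrete)

/-- The trajectories that follow some word of `S`. -/
def follow (ρ : Config) (S : Set (List Bool)) : Set Path := ⋃ w ∈ S, cyl ρ w

lemma measurableSet_follow (ρ : Config) (S : Set (List Bool)) : MeasurableSet (follow ρ S) :=
  MeasurableSet.biUnion (Set.to_countable _) fun w _ => measurableSet_cyl ρ w

lemma measure_follow {k : ℕ} {r : ℝ} {ρ : Config} {μ : Measure Path}
    (hμ : IsFrozenLaw 1 1 Nat.one_pos r ρ μ) {S : Set (List Bool)}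
    (hS : ∀ w ∈ S, Stops k r (st0 ρ) w) : μ (follow ρ S) = mass S := by
  rw [follow, measure_biUnion (Set.to_countable _) ?_ fun w _ => measurableSet_cyl ρ w]
  · exact tsum_congr fun w => measure_cyl hμ (hS w w.2)
  · intro w hw w' hw' hne
    refine Set.disjoint_left.2 fun y hy hy' => hne ?_
    exact stops_unique (hS w hw) (hS w' hw') hy hy'

lemma disjoint_follow (k : ℕ) (r : ℝ) (x : Z2) (ρ : Config) :
    Disjoint (follow ρ (finalWords k r x ρ true)) (follow ρ (finalWords k r x ρ false)) := by
  refine Set.disjoint_left.2 fun y hy hy' => ?_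
  simp only [follow, Set.mem_iUnion] at hy hy'
  obtain ⟨w, hw, hyw⟩ := hy
  obtain ⟨w', hw', hyw'⟩ := hy'
  obtain rfl := stops_unique hw.1 hw'.1 hyw hyw'
  exact absurd (hw.2.symm.trans hw'.2) (by simp)

/-- Exactly one final label at `x` occurs, almost surely. -/
lemma mass_add_mass {k : ℕ} {r : ℝ} {ρ : Config} {μ : Measure Path} [IsProbabilityMeasure μ]
    (hμ : IsFrozenLaw 1 1 Nat.one_pos r ρ μ) (h0 : (0, 0) ∈ ball r) (x : Z2) :
    mass (finalWords k r x ρ true) + mass (finalWords k r x ρ false) = 1 := by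
  apply le_antisymm
  · rw [← measure_follow hμ (S := finalWords k r x ρ true) fun w hw => hw.1,
      ← measure_follow hμ (S := finalWords k r x ρ false) fun w hw => hw.1,
      ← measure_union (disjoint_follow k r x ρ) (measurableSet_follow _ _)]
    exact prob_le_one
  · refine (one_le_mass_stops (k := k) (s := st0 ρ) (Or.inl h0)).trans
      (le_trans (mass_mono fun w hw => ?_) (mass_union_le _ _))
    cases h : (run (st0 ρ) w).2.1 x
    · exact Or.inr ⟨hw, h⟩
    · exact Or.inl ⟨hw, h⟩

/-- The expected final weight is `f_H` times the difference of the probabilities of the final labels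
`H` and `V`. -/
lemma integral_wt {k : ℕ} {r : ℝ} {ρ : Config} {μ : Measure Path} [IsProbabilityMeasure μ]
    (hμ : IsFrozenLaw 1 1 Nat.one_pos r ρ μ) (h0 : (0, 0) ∈ ball r) {x : Z2} (hx : fV x = -fH x) :
    ∫ y, wt ((fseq 1 Nat.one_pos r ρ y (tau 1 Nat.one_pos r ρ k y)).2) x ∂μ =
      fH x * (2 * (mass (finalWords k r x ρ true)).toReal - 1) := by
  set E := fun β => follow ρ (finalWords k r x ρ β) with hE
  have hEβ : ∀ β, ∀ y ∈ E β,
      (fseq 1 Nat.one_pos r ρ y (tau 1 Nat.one_pos r ρ k y)).2 x = β := by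
    intro β y hy
    simp only [hE, follow, Set.mem_iUnion] at hy
    obtain ⟨w, hw, hyw⟩ := hy
    rw [tau_eq hw.1 hyw, fseq_eq w hw.1.noStop.1 hyw]
    exact hw.2
  have hcompl : μ (E true ∪ E false)ᶜ = 0 := by
    rw [prob_compl_eq_zero_iff ((measurableSet_follow _ _).union (measurableSet_follow _ _)),
      measure_union (disjoint_follow k r x ρ) (measurableSet_follow _ _),
      measure_follow hμ fun w hw => hw.1, measure_follow hμ fun w hw => hw.1,
      mass_add_mass hμ h0]
  have hae : (fun y => wt ((fseq 1 Nat.one_pos r ρ y (tau 1 Nat.one_pos r ρ k y)).2) x) =ᵐ[μ]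
      fun y => fH x * (2 * (E true).indicator (fun _ => (1 : ℝ)) y - 1) := by
    have : ∀ᵐ y ∂μ, y ∈ E true ∪ E false := hcompl
    filter_upwards [this] with y hy
    rcases hy with hy | hy
    · simp [wt, hEβ _ y hy, hy]
      ring
    · have : y ∉ E true := fun h => by
        have := (hEβ _ y h).symm.trans (hEβ _ y hy)
        simp at this
      simp [wt, hEβ _ y hy, this, hx]
  have hint : Integrable ((E true).indicator (fun _ => (1 : ℝ))) μ :=
    (integrable_const _).indicator (measurableSet_follow _ _)
  rw [integral_congr_ae hae, integral_const_mul, integral_sub (hint.const_mul _)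
    (integrable_const _), integral_const_mul, integral_indicator_const _ (measurableSet_follow _ _)]
  simp [Measure.real, measure_follow hμ (S := finalWords k r x ρ true) fun w hw => hw.1]

end HV

/-! ### Averaging over the initial labels -/

namespace HV

lemma measurable_stp (b : Bool) : Measurable (stp b) := by
  have hsw : Measurable fun q : (Config × ℕ) × Z2 => stp b (q.2, q.1) := by
    refine measurable_from_prod_countable_left fun p => ?_
    have hl : Measurable fun q : Config × ℕ => q.1 p := (measurable_pi_apply p).comp measurable_fst
    have hpos : Measurable fun q : Config × ℕ => p + dir (!q.1 p) b :=
      (Measurable.of_discrete (f := fun h : Bool => p + dir (!h) b)).comp hl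
    refine hpos.prodMk (Measurable.prodMk ?_ ?_)
    · refine measurable_pi_lambda _ fun z => ?_
      by_cases hz : z = p
      · subst hz
        simpa [Function.comp_def] using (Measurable.of_discrete (f := Bool.not)).comp hl
      · simpa [hz, Function.comp_def] using (measurable_pi_apply z).comp measurable_fst
    · exact Measurable.ite (hpos (MeasurableSet.of_discrete (s := {((0, 0) : Z2)})))
        (measurable_snd.add_const 1) measurable_snd
  exact hsw.comp measurable_swap

lemma measurable_run (w : List Bool) : Measurable fun s => run s w := by
  induction w with
  | nil => exact measurable_id
  | cons b w ih => exact ih.comp (measurable_stp b)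

lemma measurableSet_stops (k : ℕ) (r : ℝ) (w : List Bool) : MeasurableSet {s | Stops k r s w} := by
  have h0 : MeasurableSet {s | Stopped k r s} := by
    have h1 : MeasurableSet {s : St | s.2.2 = k} :=
      (measurable_snd.comp measurable_snd) (MeasurableSet.singleton k)
    have h2 : MeasurableSet {s : St | s.1 ∈ bdry r} :=
      measurable_fst (MeasurableSet.of_discrete (s := bdry r))
    exact h1.union h2
  induction w with
  | nil => exact h0
  | cons b w ih => exact h0.compl.inter (measurable_stp b ih)

lemma measurable_mass (k : ℕ) (r : ℝ) (x : Z2) (β : Bool) :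
    Measurable fun ρ => mass (finalWords k r x ρ β) := by
  have hst : Measurable st0 := by
    unfold st0
    fun_prop
  have hw : ∀ w, MeasurableSet {ρ | w ∈ finalWords k r x ρ β} := by
    intro w
    refine (hst (measurableSet_stops k r w)).inter ?_
    have : Measurable fun ρ => (run (st0 ρ) w).2.1 x :=
      (measurable_pi_apply x).comp
        (measurable_fst.comp (measurable_snd.comp ((measurable_run w).comp hst)))
    exact this (MeasurableSet.singleton β)
  have e : (fun ρ => mass (finalWords k r x ρ β)) = fun ρ => ∑' w : List Bool,
      {ρ | w ∈ finalWords k r x ρ β}.indicator (fun _ => (2 : ℝ≥0∞)⁻¹ ^ w.length) ρ := by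
    funext ρ
    rw [mass, tsum_subtype (finalWords k r x ρ β) fun w => (2 : ℝ≥0∞)⁻¹ ^ w.length]
    rfl
  rw [e]
  exact Measurable.tsum fun w => measurable_const.indicator (hw w)

lemma measurable_flipAt (x : Z2) : Measurable (flipAt x) := by
  refine measurable_pi_lambda _ fun z => ?_
  by_cases hz : z = x
  · subst hz
    simpa [flipAt, Function.comp_def] using
      (Measurable.of_discrete (f := Bool.not)).comp (measurable_pi_apply z)
  · simpa [flipAt, hz] using measurable_pi_apply z

lemma measurableSet_label_cylinder (F : Finset Z2) (g : Config) :
    MeasurableSet {ρ : Config | ∀ z ∈ F, ρ z = g z} := by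
  have : {ρ : Config | ∀ z ∈ F, ρ z = g z} = ⋂ z ∈ F, (fun ρ : Config => ρ z) ⁻¹' {g z} := by
    ext; simp
  rw [this]
  exact Finset.measurableSet_biInter _ fun z _ =>
    measurable_pi_apply z (MeasurableSet.singleton _)

/-- The cylinder events generate the product `σ`-algebra on label configurations. -/
lemma generateFrom_label_cylinders :
    (inferInstance : MeasurableSpace Config) = MeasurableSpace.generateFrom
      {A | ∃ (F : Finset Z2) (g : Config), A = {ρ : Config | ∀ z ∈ F, ρ z = g z}} := by
  apply le_antisymm
  · refine iSup_le fun z => ?_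
    rw [← measurable_iff_comap_le]
    refine @measurable_to_countable' _ _ _ _ (_) _ fun b => ?_
    apply MeasurableSpace.measurableSet_generateFrom
    exact ⟨{z}, fun _ => b, by ext; simp⟩
  · refine MeasurableSpace.generateFrom_le ?_
    rintro _ ⟨F, g, rfl⟩
    exact measurableSet_label_cylinder F g

/-- Independent uniform labels are invariant in law under flipping one label. -/
lemma map_flipAt {ν : Measure Config} [IsProbabilityMeasure ν] (hν : IsIUD ν) (x : Z2) :
    ν.map (flipAt x) = ν := by
  symm
  refine ext_of_generate_finite _ generateFrom_label_cylinders ?_ ?_ ?_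
  · rintro _ ⟨F, g, rfl⟩ _ ⟨F', g', rfl⟩ ⟨ρ₀, h, h'⟩
    refine ⟨F ∪ F', ρ₀, ?_⟩
    ext ρ
    simp only [Set.mem_inter_iff, Set.mem_ofPred_eq, Finset.mem_union] at h h' ⊢
    constructor
    · rintro ⟨h1, h2⟩ z (hz | hz)
      · rw [h1 z hz, h z hz]
      · rw [h2 z hz, h' z hz]
    · intro h1
      exact ⟨fun z hz => by rw [h1 z (Or.inl hz), h z hz],
        fun z hz => by rw [h1 z (Or.inr hz), h' z hz]⟩
  · rintro _ ⟨F, g, rfl⟩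
    rw [Measure.map_apply (measurable_flipAt x) (measurableSet_label_cylinder F g), hν F g,
      ← hν F (flipAt x g)]
    congr 1
    ext ρ
    simp only [Set.mem_preimage, Set.mem_ofPred_eq]
    refine forall₂_congr fun z _ => ?_
    by_cases hz : z = x
    · subst hz
      simp [flipAt, Bool.eq_not, eq_comm]
    · simp [flipAt, hz]
  · rw [Measure.map_apply (measurable_flipAt x) MeasurableSet.univ, Set.preimage_univ]

/-- After averaging over the initial labels, the two final labels at `x` have comparable
probabilities. -/
lemma lintegral_mass_le {k : ℕ} {r : ℝ} {x : Z2} (hx : ∀ z ∈ block x, z ≠ (0, 0) ∧ z ∉ bdry r)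
    {ν : Measure Config} [IsProbabilityMeasure ν] (hν : IsIUD ν) (β : Bool) :
    ∫⁻ ρ, mass (finalWords k r x ρ β) ∂ν ≤
      (2 ^ 15 + 1) * ∫⁻ ρ, mass (finalWords k r x ρ (!β)) ∂ν := by
  have hm := measurable_mass k r x (!β)
  calc ∫⁻ ρ, mass (finalWords k r x ρ β) ∂ν
      ≤ ∫⁻ ρ, (2 ^ 15 * mass (finalWords k r x ρ (!β)) +
          mass (finalWords k r x (flipAt x ρ) (!β))) ∂ν :=
        lintegral_mono fun ρ => mass_final_le hx ρ β
    _ = 2 ^ 15 * ∫⁻ ρ, mass (finalWords k r x ρ (!β)) ∂ν +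
          ∫⁻ ρ, mass (finalWords k r x (flipAt x ρ) (!β)) ∂ν := by
        rw [lintegral_add_left (hm.const_mul _), lintegral_const_mul _ hm]
    _ = (2 ^ 15 + 1) * ∫⁻ ρ, mass (finalWords k r x ρ (!β)) ∂ν := by
        rw [← lintegral_map hm (measurable_flipAt x), map_flipAt hν, add_mul, one_mul]

end HV

/-! ### The bound on the expected weight -/

/-- **Lemma (anti-concentration bound for the expected weight at time `τ`).**
Let `q = 1`, `n = 1`, `k ≥ 0` and `r ≥ 6`.  Then for every `x ∈ B_{r−3} \ B_3`,
`|E_{ρ∼IUD} E[wt_{ζ_{τ_{k,r}(ρ)}}(x)]| ≤ (1 − 1/(58·2⁵⁸))·f(x)`, where the inner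
expectation is over the frozen single-walker `H`–`V` walk with initial label
configuration `ρ` and the outer expectation is over `ρ` sampled from the IUD
measure. -/
theorem hv_expected_weight_anti_concentration
    (k : ℕ) (r : ℕ) (hr : 6 ≤ r) (x : HV.Z2)
    (hx : x ∈ HV.ball ((r : ℝ) - 3) \ HV.ball 3)
    (ν : MeasureTheory.Measure HV.Config) [MeasureTheory.IsProbabilityMeasure ν]
    (hν : HV.IsIUD ν)
    (μ : HV.Config → MeasureTheory.Measure HV.Path)
    (hprob : ∀ ρ, MeasureTheory.IsProbabilityMeasure (μ ρ))
    (hμ : ∀ ρ, HV.IsFrozenLaw 1 1 Nat.one_pos (r : ℝ) ρ (μ ρ)) :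
    |∫ ρ, (∫ y, HV.wt ((HV.fseq 1 Nat.one_pos (r : ℝ) ρ y
          (HV.tau 1 Nat.one_pos (r : ℝ) ρ k y)).2) x ∂(μ ρ)) ∂ν| ≤
      (1 - 1 / (58 * 2 ^ 58)) * HV.fMax x := by
  obtain ⟨hx1, hx2⟩ := id hx
  have hblock := HV.block_avoids hx
  have hx0 : x ≠ (0, 0) := (hblock x (by simp [HV.block])).1
  have h0 : ((0, 0) : HV.Z2) ∈ HV.ball (r : ℝ) := by
    have : 0 < r := by omega
    simpa [HV.ball, HV.norm2] using this
  set m : Bool → HV.Config → ℝ≥0∞ := fun β ρ => HV.mass (HV.finalWords k r x ρ β) with hm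
  have hsum : ∀ ρ, m true ρ + m false ρ = 1 := fun ρ =>
    have := hprob ρ
    HV.mass_add_mass (hμ ρ) h0 x
  have hmeas : ∀ β, Measurable (m β) := fun β => HV.measurable_mass k r x β
  have hI : ∀ ρ, (∫ y, HV.wt ((HV.fseq 1 Nat.one_pos (r : ℝ) ρ y
      (HV.tau 1 Nat.one_pos (r : ℝ) ρ k y)).2) x ∂(μ ρ)) =
      HV.fH x * (2 * (m true ρ).toReal - 1) := fun ρ =>
    have := hprob ρ
    HV.integral_wt (hμ ρ) h0 (HV.fV_eq_neg x hx0)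
  -- the averaged probabilities of the two final labels
  set H := ∫⁻ ρ, m true ρ ∂ν with hH
  set V := ∫⁻ ρ, m false ρ ∂ν with hV
  have hHV : H + V = 1 := by
    rw [hH, hV, ← lintegral_add_left (hmeas true)]
    simp [hsum]
  have hle1 : V ≤ (2 ^ 15 + 1) * H := HV.lintegral_mass_le hblock hν false
  have hle2 : H ≤ (2 ^ 15 + 1) * V := HV.lintegral_mass_le hblock hν true
  have hHt : H ≠ ⊤ := fun h => by simp [h] at hHV
  have hVt : V ≠ ⊤ := fun h => by simp [h] at hHV
  have hsumR : H.toReal + V.toReal = 1 := by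
    rw [← ENNReal.toReal_add hHt hVt, hHV]; rfl
  have hle1R : V.toReal ≤ (2 ^ 15 + 1) * H.toReal := by
    have := ENNReal.toReal_mono (ENNReal.mul_ne_top (by finiteness) hHt) hle1
    rw [ENNReal.toReal_mul] at this
    convert this using 2
    norm_num
  have hle2R : H.toReal ≤ (2 ^ 15 + 1) * V.toReal := by
    have := ENNReal.toReal_mono (ENNReal.mul_ne_top (by finiteness) hVt) hle2
    rw [ENNReal.toReal_mul] at this
    convert this using 2
    norm_num
  have hfin : ∀ ρ, m true ρ < ⊤ := fun ρ =>
    lt_of_le_of_lt (le_self_add.trans (hsum ρ).le) ENNReal.one_lt_top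
  have hint : Integrable (fun ρ => (m true ρ).toReal) ν :=
    integrable_toReal_of_lintegral_ne_top (hmeas true).aemeasurable hHt
  have hIH : ∫ ρ, (m true ρ).toReal ∂ν = H.toReal :=
    integral_toReal (hmeas true).aemeasurable (Eventually.of_forall hfin)
  have htot : ∫ ρ, HV.fH x * (2 * (m true ρ).toReal - 1) ∂ν = HV.fH x * (2 * H.toReal - 1) := by
    rw [integral_const_mul, integral_sub (hint.const_mul _) (integrable_const _),
      integral_const_mul, hIH]
    simp
  simp_rw [hI]
  rw [htot, abs_mul, mul_comm]
  have hc : |2 * H.toReal - 1| ≤ 1 - 1 / (58 * 2 ^ 58) := by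
    rw [abs_le]
    constructor <;> norm_num at hle1R hle2R ⊢ <;> linarith
  exact mul_le_mul hc (le_max_left _ _) (abs_nonneg _) ((abs_nonneg _).trans hc)
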